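/- Let q be a braiding matrix with connected Dynkin diagram such that B_q is finite dimensional, and let B be a pre-Nichols algebra of q with finite GKdim. Let i,j,k ∈ I_θ be such that q̃_{jk} = 1 and q_{ii} = q̃_{ij} = −q̃_{ik} ∈ G_3'. Then [x_i, [x_{ij}, x_{ik}]_c]_c = −q_{jk} q_{ik} q_{ji} [x_{iik}, x_{ij}]_c − q_{ij} x_{ij} x_{iik} in B. -/

import Mathlib

/-
Common framework for formalizing statements from
"Finite GK-dimensional pre-Nichols algebras of (super)modular and unidentified type"
(Angiono, Campagnolo, Sanmarco).

We work over `ℂ` (an algebraically closed field of characteristic zero).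
A braiding matrix is `q : Fin θ → Fin θ → ℂˣ`.  The tensor algebra `T(V)` of the
associated braided vector space of diagonal type is realized as the free algebra
on `Fin θ`.  The braided bialgebra structure on `T(V)` (the braided coproduct,
uniquely determined by the braiding matrix) is packaged in the structure
`BraidedStr`: its fields characterize it uniquely, so quantifying over
`S : BraidedStr θ q` is equivalent to using "the" braided coproduct.

A pre-Nichols algebra of `q` is the quotient `T(V)/I` by an ℕ₀-homogeneous
(two-sided) braided bi-ideal `I` generated in degrees ≥ 2 (`IsPreNicholsIdeal`);
such an ideal is automatically contained in the defining ideal `Jq` of the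
Nichols algebra, which is the largest such ideal.  A statement
"`x = 0` holds in the pre-Nichols algebra `T(V)/I`" is formalized as `x ∈ I`.
-/

open scoped TensorProduct

noncomputable section

namespace PreNicholsPaper

/-- The tensor algebra `T(V)` of the braided vector space of diagonal type of rank `θ`. -/
abbrev TV (θ : ℕ) := FreeAlgebra ℂ (Fin θ)

/-- The generator `x_i` of `T(V)`. -/
def gen (θ : ℕ) (i : Fin θ) : TV θ := FreeAlgebra.ι ℂ i

/-- The monomial `x_{i_1} ⋯ x_{i_n}` associated to a word. -/
def wordElem (θ : ℕ) (w : List (Fin θ)) : TV θ := (w.map (gen θ)).prod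

/-- The multidegree in `ℕ₀^θ` of a word. -/
def degW (θ : ℕ) (w : List (Fin θ)) : Fin θ → ℕ := fun i => w.count i

/-- `α_i`, the `i`-th canonical basis vector of `ℕ₀^θ`. -/
def δ (θ : ℕ) (i : Fin θ) : Fin θ → ℕ := fun k => if k = i then 1 else 0

/-- The bilinear form `ℕ₀^θ × ℕ₀^θ → ℂˣ` attached to the braiding matrix,
`q(α_i, α_j) = q_{ij}`, evaluated in `ℂ`. -/
def qf {θ : ℕ} (q : Fin θ → Fin θ → ℂˣ) (a b : Fin θ → ℕ) : ℂ :=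
  ∏ i : Fin θ, ∏ j : Fin θ, (q i j : ℂ) ^ (a i * b j)

/-- `q̃_{ij} = q_{ij} q_{ji}`. -/
def qtil {θ : ℕ} (q : Fin θ → Fin θ → ℂˣ) (i j : Fin θ) : ℂ := (q i j : ℂ) * (q j i : ℂ)

/-- The braided commutator `[u,v]_c = uv - q(a,b) vu` of elements `u, v`
which are homogeneous of multidegrees `a`, `b` respectively. -/
def brk {θ : ℕ} (q : Fin θ → Fin θ → ℂˣ) (a b : Fin θ → ℕ) (u v : TV θ) : TV θ :=
  u * v - qf q a b • (v * u)

/-- `(ad_c x_i) y = x_i y - q(α_i, b) y x_i` for `y` homogeneous of multidegree `b`. -/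
def ad1 {θ : ℕ} (q : Fin θ → Fin θ → ℂˣ) (i : Fin θ) (b : Fin θ → ℕ) (y : TV θ) : TV θ :=
  brk q (δ θ i) b (gen θ i) y

/-- The iterated braided adjoint `x_{i_1 i_2 ⋯ i_k} = (ad_c x_{i_1}) x_{i_2 ⋯ i_k}`. -/
def xw {θ : ℕ} (q : Fin θ → Fin θ → ℂˣ) : List (Fin θ) → TV θ
  | [] => 1
  | [i] => gen θ i
  | i :: w => ad1 q i (degW θ w) (xw q w)

/-- `(ad_c x_i)^m x_j`. -/
def adpow {θ : ℕ} (q : Fin θ → Fin θ → ℂˣ) (i j : Fin θ) : ℕ → TV θ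
  | 0 => gen θ j
  | m + 1 => ad1 q i (fun k => m * δ θ i k + δ θ j k) (adpow q i j m)

/-- The homogeneous component of total degree `n` of `T(V)`. -/
def homogTot (θ : ℕ) (n : ℕ) : Submodule ℂ (TV θ) :=
  Submodule.span ℂ {x | ∃ w : List (Fin θ), w.length = n ∧ x = wordElem θ w}

/-- The homogeneous component of multidegree `d ∈ ℕ₀^θ` of `T(V)`. -/
def homogD (θ : ℕ) (d : Fin θ → ℕ) : Submodule ℂ (TV θ) :=
  Submodule.span ℂ {x | ∃ w : List (Fin θ), degW θ w = d ∧ x = wordElem θ w}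

/-- The braided bialgebra structure on `T(V)` determined by the braiding matrix `q`:
the braided coproduct `Δ` together with the multiplication `mulB` of the braided
tensor product `T(V) ⊗ T(V)`.  These axioms determine `Δ` and `mulB` uniquely. -/
structure BraidedStr (θ : ℕ) (q : Fin θ → Fin θ → ℂˣ) where
  Δ : TV θ →ₗ[ℂ] TensorProduct ℂ (TV θ) (TV θ)
  mulB : TensorProduct ℂ (TV θ) (TV θ) →ₗ[ℂ]
    TensorProduct ℂ (TV θ) (TV θ) →ₗ[ℂ] TensorProduct ℂ (TV θ) (TV θ)
  mulB_spec : ∀ (a d : TV θ) (wb wc : List (Fin θ)),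
    mulB (a ⊗ₜ[ℂ] wordElem θ wb) (wordElem θ wc ⊗ₜ[ℂ] d)
      = qf q (degW θ wb) (degW θ wc) • ((a * wordElem θ wc) ⊗ₜ[ℂ] (wordElem θ wb * d))
  Δ_one : Δ 1 = 1 ⊗ₜ[ℂ] 1
  Δ_gen : ∀ i, Δ (gen θ i) = gen θ i ⊗ₜ[ℂ] 1 + 1 ⊗ₜ[ℂ] gen θ i
  Δ_mul : ∀ u v : TV θ, Δ (u * v) = mulB (Δ u) (Δ v)

variable {θ : ℕ} {q : Fin θ → Fin θ → ℂˣ}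

/-- `x` is a primitive element. -/
def IsPrimitiveIn (S : BraidedStr θ q) (x : TV θ) : Prop :=
  S.Δ x = x ⊗ₜ[ℂ] (1 : TV θ) + (1 : TV θ) ⊗ₜ[ℂ] x

/-- The submodule `I ⊗ T(V) + T(V) ⊗ J` of `T(V) ⊗ T(V)`. -/
def mixedPair (I J : Submodule ℂ (TV θ)) : Submodule ℂ (TensorProduct ℂ (TV θ) (TV θ)) :=
  Submodule.span ℂ
    ({x | ∃ a b : TV θ, a ∈ I ∧ x = a ⊗ₜ[ℂ] b} ∪ {x | ∃ a b : TV θ, b ∈ J ∧ x = a ⊗ₜ[ℂ] b})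

/-- The submodule `I ⊗ T(V) + T(V) ⊗ I` of `T(V) ⊗ T(V)`. -/
def mixedSub (I : Submodule ℂ (TV θ)) : Submodule ℂ (TensorProduct ℂ (TV θ) (TV θ)) :=
  mixedPair I I

/-- `I` is the defining ideal of a pre-Nichols algebra of `q`：an ℕ₀-homogeneous
two-sided (bi-)ideal of `T(V)` generated in degrees `≥ 2` which is also a coideal.
Such an ideal is automatically contained in the defining ideal `Jq` of the Nichols
algebra, and the pre-Nichols algebra is the quotient `T(V)/I`. -/
structure IsPreNicholsIdeal (S : BraidedStr θ q) (I : Submodule ℂ (TV θ)) : Prop where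
  mul_left : ∀ a x : TV θ, x ∈ I → a * x ∈ I
  mul_right : ∀ a x : TV θ, x ∈ I → x * a ∈ I
  homog_ge2 : I = Submodule.span ℂ {x | x ∈ I ∧ ∃ n, 2 ≤ n ∧ x ∈ homogTot θ n}
  coideal : ∀ x ∈ I, S.Δ x ∈ mixedSub I

/-- The defining ideal `J_q` of the Nichols algebra `B_q = T(V)/J_q`:
the maximal homogeneous braided Hopf ideal generated in degrees `≥ 2`. -/
def Jq (S : BraidedStr θ q) : Submodule ℂ (TV θ) := sSup {I | IsPreNicholsIdeal S I}

/-- The standard filtration of `T(V)`: span of words of length `≤ n`. -/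
def Wfil (θ : ℕ) (n : ℕ) : Submodule ℂ (TV θ) :=
  Submodule.span ℂ {x | ∃ w : List (Fin θ), w.length ≤ n ∧ x = wordElem θ w}

/-- The quotient algebra `T(V)/I` has finite Gelfand–Kirillov dimension, i.e.
the standard filtration of the (finitely generated) quotient has polynomial growth. -/
def FinGK (I : Submodule ℂ (TV θ)) : Prop :=
  ∃ C d : ℕ, ∀ n : ℕ, Module.finrank ℂ ((Wfil θ n).map I.mkQ) ≤ C * (n + 1) ^ d

/-- The Gelfand–Kirillov dimension of the quotient algebra `T(V)/I`. -/
def GKdim (I : Submodule ℂ (TV θ)) : ℝ :=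
  Filter.limsup
    (fun n : ℕ => Real.log (Module.finrank ℂ ((Wfil θ n).map I.mkQ)) / Real.log n)
    Filter.atTop

/-- `I` defines an eminent pre-Nichols algebra: it is a finite-GKdim pre-Nichols
algebra, and every finite-GKdim pre-Nichols algebra of `q` is a quotient of it. -/
def IsEminent (S : BraidedStr θ q) (I : Submodule ℂ (TV θ)) : Prop :=
  IsPreNicholsIdeal S I ∧ FinGK I ∧
    ∀ I' : Submodule ℂ (TV θ), IsPreNicholsIdeal S I' → FinGK I' → I ≤ I'

/-- The Dynkin diagram of the braiding matrix `q`: vertices `Fin θ`, an edge between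
`i ≠ j` iff `q̃_{ij} ≠ 1`. -/
def dynkin {θ : ℕ} (q : Fin θ → Fin θ → ℂˣ) : SimpleGraph (Fin θ) :=
  SimpleGraph.fromRel (fun i j => qtil q i j ≠ 1)

/-- The quantum number `(m)_t = 1 + t + ⋯ + t^{m-1}`. -/
def qnum (t : ℂ) (m : ℕ) : ℂ := ∑ k ∈ Finset.range m, t ^ k

/-- The set of `n ∈ ℕ₀` such that `(n+1)_{q_{ii}} (1 - q_{ii}^n q̃_{ij}) = 0`,
i.e. such that `(ad_c x_i)^{n+1} x_j = 0` in the Nichols algebra.  The entry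
`c_{ij}` of the generalized Cartan matrix is `-(min of this set)`. -/
def cSet {θ : ℕ} (q : Fin θ → Fin θ → ℂˣ) (i j : Fin θ) : Set ℕ :=
  {n | qnum (q i i : ℂ) (n + 1) * (1 - (q i i : ℂ) ^ n * qtil q i j) = 0}

/-- The generalized Cartan matrix of `q`. -/
def cij {θ : ℕ} (q : Fin θ → Fin θ → ℂˣ) (i j : Fin θ) : ℤ :=
  if i = j then 2 else -(Int.ofNat (sInf (cSet q i j)))

/-- All entries `c_{ij}` are defined at the vertex `i`. -/
def reflectable {θ : ℕ} (q : Fin θ → Fin θ → ℂˣ) (i : Fin θ) : Prop :=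
  ∀ j, j ≠ i → (cSet q i j).Nonempty

/-- The `i`-th reflection of the braiding matrix:
`(r_i q)_{jk} = q(s_i α_j, s_i α_k)` where `s_i α_j = α_j - c_{ij} α_i`. -/
def reflectMat {θ : ℕ} (q : Fin θ → Fin θ → ℂˣ) (i : Fin θ) : Fin θ → Fin θ → ℂˣ :=
  fun j k =>
    q j k * q j i ^ (-(cij q i k)) * q i k ^ (-(cij q i j)) * q i i ^ (cij q i j * cij q i k)

/-- The reflection `s_i` acting on `ℤ^θ`. -/
def sRefl {θ : ℕ} (q : Fin θ → Fin θ → ℂˣ) (i : Fin θ) (β : Fin θ → ℤ) : Fin θ → ℤ :=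
  fun k => β k - (if k = i then ∑ j, cij q i j * β j else 0)

/-- The (real) roots of `q`, together with the base points of the Weyl groupoid at
which they live: pairs `(q', β)` obtained from a simple root of `q` by iterated
reflections. -/
inductive ReachRoot {θ : ℕ} (q₀ : Fin θ → Fin θ → ℂˣ) :
    (Fin θ → Fin θ → ℂˣ) → (Fin θ → ℤ) → Prop
  | simple (j : Fin θ) : ReachRoot q₀ q₀ (fun k => if k = j then 1 else 0)
  | reflect {q' : Fin θ → Fin θ → ℂˣ} {β : Fin θ → ℤ} (i : Fin θ) :
      ReachRoot q₀ q' β → ReachRoot q₀ (reflectMat q' i) (sRefl q' i β)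

/-- `q` has a finite (generalized) root system: all reflections are defined at every
point of the Weyl groupoid, and the set of roots so obtained is finite. -/
def FiniteRootSystem {θ : ℕ} (q : Fin θ → Fin θ → ℂˣ) : Prop :=
  (∀ q' i, (∃ β, ReachRoot q q' β) → reflectable q' i) ∧
    Set.Finite {β : Fin θ → ℤ | ∃ q', ReachRoot q q' β}

/-- Conjecture (Andruskiewitsch–Angiono–Heckenberger): the root system of a Nichols
algebra of diagonal type with finite Gelfand–Kirillov dimension is finite. -/
def AAH : Prop :=
  ∀ (θ : ℕ) (q : Fin θ → Fin θ → ℂˣ) (S : BraidedStr θ q), FinGK (Jq S) → FiniteRootSystem q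

/-- The two-sided ideal of `T(V)` generated by a set. -/
def idealGen (θ : ℕ) (s : Set (TV θ)) : Submodule ℂ (TV θ) :=
  Submodule.span ℂ {x | ∃ g ∈ s, ∃ a b : TV θ, x = a * g * b}

end PreNicholsPaper

namespace PreNicholsPaper

section Words

variable {θ : ℕ}

@[simp] lemma wordElem_nil : wordElem θ [] = 1 := rfl

lemma wordElem_cons (a : Fin θ) (w : List (Fin θ)) :
    wordElem θ (a :: w) = gen θ a * wordElem θ w := by
  simp [wordElem]

lemma wordElem_append (v w : List (Fin θ)) :
    wordElem θ (v ++ w) = wordElem θ v * wordElem θ w := by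
  simp [wordElem]

lemma wordElem_singleton (a : Fin θ) : wordElem θ [a] = gen θ a := by
  simp [wordElem]

/-- The monomials form a basis of the tensor algebra. -/
def wordBasis (θ : ℕ) : Module.Basis (List (Fin θ)) ℂ (TV θ) :=
  (FreeAlgebra.basisFreeMonoid ℂ (Fin θ)).reindex FreeMonoid.toList

lemma wordBasis_apply (w : List (Fin θ)) : wordBasis θ w = wordElem θ w := by
  simp only [wordBasis, Module.Basis.reindex_apply, FreeAlgebra.basisFreeMonoid,
    Module.Basis.map_apply, Finsupp.coe_basisSingleOne]
  change (FreeAlgebra.equivMonoidAlgebraFreeMonoid (R := ℂ) (X := Fin θ)).symm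
    (MonoidAlgebra.single (FreeMonoid.ofList w) 1) = _
  rw [AlgEquiv.symm_apply_eq]
  induction w with
  | nil => rw [wordElem_nil, map_one]; rfl
  | cons a w ih =>
    rw [wordElem_cons, map_mul, ← ih]
    simp [FreeAlgebra.equivMonoidAlgebraFreeMonoid, gen, MonoidAlgebra.single_mul_single]

lemma span_wordElem : Submodule.span ℂ (Set.range (wordElem θ)) = ⊤ := by
  rw [← (wordBasis θ).span_eq]
  congr 2
  exact funext fun w => (wordBasis_apply w).symm

/-- Linear maps out of the tensor algebra are determined by their values on monomials. -/
lemma hom_ext_words {M : Type*} [AddCommMonoid M] [Module ℂ M] {f g : TV θ →ₗ[ℂ] M}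
    (h : ∀ w, f (wordElem θ w) = g (wordElem θ w)) : f = g :=
  (wordBasis θ).ext fun w => by rw [wordBasis_apply, h]

/-- Linear maps with the same value on `1` and the same recursion for left multiplication by
generators agree. -/
lemma word_induction {p : TV θ → Prop} (one : p 1) (cons : ∀ a t, p t → p (gen θ a * t))
    (add : ∀ s t, p s → p t → p (s + t)) (smul : ∀ (c : ℂ) t, p t → p (c • t)) (t : TV θ) : p t := by
  have ht : t ∈ Submodule.span ℂ (Set.range (wordElem θ)) := by rw [span_wordElem]; trivial
  induction ht using Submodule.span_induction with
  | mem x hx =>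
    obtain ⟨w, rfl⟩ := hx
    induction w with
    | nil => exact one
    | cons a w ih => rw [wordElem_cons]; exact cons a _ ih
  | zero => simpa using smul 0 1 one
  | add x y _ _ hx hy => exact add x y hx hy
  | smul c x _ hx => exact smul c x hx

lemma degW_nil : degW θ [] = 0 := by
  ext i; simp [degW]

lemma degW_cons (a : Fin θ) (w : List (Fin θ)) : degW θ (a :: w) = δ θ a + degW θ w := by
  ext i
  simp only [degW, δ, List.count_cons, Pi.add_apply, beq_iff_eq]
  rw [add_comm]
  simp [eq_comm]

end Words

section Form

variable {θ : ℕ} (q : Fin θ → Fin θ → ℂˣ)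

lemma qf_add_left (a b c : Fin θ → ℕ) : qf q (a + b) c = qf q a c * qf q b c := by
  simp [qf, add_mul, pow_add, Finset.prod_mul_distrib]

lemma qf_add_right (a b c : Fin θ → ℕ) : qf q a (b + c) = qf q a b * qf q a c := by
  simp [qf, mul_add, pow_add, Finset.prod_mul_distrib]

lemma qf_zero_left (a : Fin θ → ℕ) : qf q 0 a = 1 := by simp [qf]

lemma qf_zero_right (a : Fin θ → ℕ) : qf q a 0 = 1 := by simp [qf]

lemma qf_single (a b : Fin θ) : qf q (δ θ a) (δ θ b) = q a b := by
  unfold qf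
  rw [Finset.prod_eq_single a, Finset.prod_eq_single b]
  · simp [δ]
  · intro c _ hc; simp [δ, hc]
  · simp
  · intro c _ hc; simp [δ, hc]
  · simp

lemma qf_ne_zero (a b : Fin θ → ℕ) : qf q a b ≠ 0 := by
  simp [qf, Finset.prod_ne_zero_iff]

/-- The algebra automorphism of the tensor algebra scaling degree `c` by `q(d, c)`. -/
def twist (d : Fin θ → ℕ) : TV θ →ₐ[ℂ] TV θ :=
  FreeAlgebra.lift ℂ fun c => qf q d (δ θ c) • gen θ c

lemma twist_gen (d : Fin θ → ℕ) (c : Fin θ) :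
    twist q d (gen θ c) = qf q d (δ θ c) • gen θ c := by
  simp [twist, gen]

lemma twist_wordElem (d : Fin θ → ℕ) (w : List (Fin θ)) :
    twist q d (wordElem θ w) = qf q d (degW θ w) • wordElem θ w := by
  induction w with
  | nil => simp [degW_nil, qf_zero_right]
  | cons a w ih =>
    rw [wordElem_cons, map_mul, ih, twist_gen, degW_cons, qf_add_right, smul_mul_smul_comm]

lemma twist_homogD (d e : Fin θ → ℕ) {y : TV θ} (hy : y ∈ homogD θ e) :
    twist q d y = qf q d e • y := by
  induction hy using Submodule.span_induction with
  | mem x hx => obtain ⟨w, rfl, rfl⟩ := hx; exact twist_wordElem q d w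
  | zero => simp
  | add x y _ _ hx hy => rw [map_add, hx, hy, smul_add]
  | smul c x _ hx => rw [map_smul, hx, smul_comm]

lemma twist_add (d e : Fin θ → ℕ) (t : TV θ) :
    twist q (d + e) t = twist q d (twist q e t) := by
  refine LinearMap.congr_fun (f := (twist q (d + e)).toLinearMap)
    (g := (twist q d).toLinearMap ∘ₗ (twist q e).toLinearMap) (hom_ext_words fun w => ?_) t
  simp [twist_wordElem, qf_add_left, smul_smul, mul_comm]

lemma twist_zero (t : TV θ) : twist q 0 t = t := by
  refine LinearMap.congr_fun (f := (twist q 0).toLinearMap)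
    (g := LinearMap.id) (hom_ext_words fun w => ?_) t
  simp [twist_wordElem, qf_zero_left]

/-- The operator `c ⊗ d ↦ y c ⊗ d + q(e, deg c) c ⊗ y d`: left multiplication by
`y ⊗ 1 + 1 ⊗ y` in the braided tensor square, for `y` of degree `e`. -/
def primMul (e : Fin θ → ℕ) (y : TV θ) : TV θ ⊗[ℂ] TV θ →ₗ[ℂ] TV θ ⊗[ℂ] TV θ :=
  TensorProduct.map (LinearMap.mulLeft ℂ y) LinearMap.id +
    TensorProduct.map (twist q e).toLinearMap (LinearMap.mulLeft ℂ y)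

lemma primMul_tmul (e : Fin θ → ℕ) (y c d : TV θ) :
    primMul q e y (c ⊗ₜ[ℂ] d) = (y * c) ⊗ₜ[ℂ] d + twist q e c ⊗ₜ[ℂ] (y * d) := by
  simp [primMul]

end Form

section Construction

variable {θ : ℕ} (q : Fin θ → Fin θ → ℂˣ)

/-- Left multiplication by `1 ⊗ b` in the braided tensor square. -/
def braidRight : TV θ →ₐ[ℂ] Module.End ℂ (TV θ ⊗[ℂ] TV θ) :=
  FreeAlgebra.lift ℂ fun a =>
    TensorProduct.map (twist q (δ θ a)).toLinearMap (LinearMap.mulLeft ℂ (gen θ a))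

lemma braidRight_wordElem (w : List (Fin θ)) :
    braidRight q (wordElem θ w) = TensorProduct.map (twist q (degW θ w)).toLinearMap
      (LinearMap.mulLeft ℂ (wordElem θ w)) := by
  induction w with
  | nil => ext; simp [degW_nil, twist_zero]
  | cons a w ih =>
    rw [wordElem_cons, map_mul, ih]
    refine TensorProduct.ext' fun c d => ?_
    simp [braidRight, gen, degW_cons, twist_add]

/-- Multiplication of the braided tensor square. -/
def braidedMul : TV θ ⊗[ℂ] TV θ →ₗ[ℂ] TV θ ⊗[ℂ] TV θ →ₗ[ℂ] TV θ ⊗[ℂ] TV θ :=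
  TensorProduct.lift <| LinearMap.mk₂ ℂ
    (fun a b => TensorProduct.map (LinearMap.mulLeft ℂ a) LinearMap.id ∘ₗ braidRight q b)
    (fun a a' b => by
      rw [← LinearMap.add_comp, ← TensorProduct.map_add_left]; congr 2; ext; simp [add_mul])
    (fun c a b => by
      rw [← LinearMap.smul_comp, ← TensorProduct.map_smul_left]; congr 2; ext; simp)
    (fun a b b' => by rw [map_add, LinearMap.comp_add])
    (fun c a b => by rw [map_smul, LinearMap.comp_smul])

lemma braidedMul_tmul (a b : TV θ) (z : TV θ ⊗[ℂ] TV θ) :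
    braidedMul q (a ⊗ₜ b) z
      = TensorProduct.map (LinearMap.mulLeft ℂ a) LinearMap.id (braidRight q b z) := rfl

/-- The algebra map sending `u` to left multiplication by the coproduct of `u`. -/
def coproductMul : TV θ →ₐ[ℂ] Module.End ℂ (TV θ ⊗[ℂ] TV θ) :=
  FreeAlgebra.lift ℂ fun a => primMul q (δ θ a) (gen θ a)

lemma coproductMul_gen (a : Fin θ) : coproductMul q (gen θ a) = primMul q (δ θ a) (gen θ a) := by
  simp [coproductMul, gen]

lemma braidedMul_primMul (a : Fin θ) (y z : TV θ ⊗[ℂ] TV θ) :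
    braidedMul q (primMul q (δ θ a) (gen θ a) y) z
      = primMul q (δ θ a) (gen θ a) (braidedMul q y z) := by
  induction y using TensorProduct.induction_on with
  | zero => simp
  | add y y' hy hy' => simp only [map_add, LinearMap.add_apply, hy, hy']
  | tmul c d =>
    simp only [primMul_tmul, map_add, LinearMap.add_apply, braidedMul_tmul, map_mul,
      Module.End.mul_apply]
    generalize braidRight q d z = z'
    induction z' using TensorProduct.induction_on with
    | zero => simp
    | add y y' hy hy' =>
      simp only [map_add] at hy hy' ⊢
      rw [← hy, ← hy']; abel
    | tmul e f => simp [braidRight, gen, primMul_tmul]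

lemma coproductMul_eq (u : TV θ) (z : TV θ ⊗[ℂ] TV θ) :
    braidedMul q (coproductMul q u (1 ⊗ₜ 1)) z = coproductMul q u z := by
  induction u using word_induction with
  | one =>
    simp only [map_one, Module.End.one_apply, braidedMul_tmul]
    rw [show LinearMap.mulLeft ℂ (1 : TV θ) = LinearMap.id from by ext; simp]
    simp
  | cons a t ih =>
    rw [map_mul, Module.End.mul_apply, Module.End.mul_apply, coproductMul_gen,
      braidedMul_primMul, ih]
  | add s t hs ht => simp only [map_add, LinearMap.add_apply, hs, ht]
  | smul c t ht => simp only [map_smul, LinearMap.smul_apply, ht]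

/-- The braided bialgebra structure of the tensor algebra. -/
def braidedStr : BraidedStr θ q where
  Δ := LinearMap.applyₗ (1 ⊗ₜ 1) ∘ₗ (coproductMul q).toLinearMap
  mulB := braidedMul q
  mulB_spec a d wb wc := by
    simp [braidedMul_tmul, braidRight_wordElem, twist_wordElem, TensorProduct.smul_tmul']
  Δ_one := by simp
  Δ_gen i := by simp [coproductMul_gen, primMul_tmul]
  Δ_mul u v := by simp [coproductMul_eq]

end Construction

section Coproduct

variable {θ : ℕ} {q : Fin θ → Fin θ → ℂˣ} (S : BraidedStr θ q)

lemma mulB_one_tmul {e : Fin θ → ℕ} {y : TV θ} (hy : y ∈ homogD θ e) (z : TV θ ⊗[ℂ] TV θ) :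
    S.mulB (1 ⊗ₜ y) z
      = TensorProduct.map (twist q e).toLinearMap (LinearMap.mulLeft ℂ y) z := by
  induction hy using Submodule.span_induction generalizing z with
  | mem x hx =>
    obtain ⟨w, rfl, rfl⟩ := hx
    refine LinearMap.congr_fun (f := S.mulB (1 ⊗ₜ wordElem θ w)) (TensorProduct.ext ?_) z
    refine hom_ext_words fun v => LinearMap.ext fun d => ?_
    simp [S.mulB_spec, twist_wordElem, TensorProduct.smul_tmul']
  | zero =>
    rw [show LinearMap.mulLeft ℂ (0 : TV θ) = 0 from by ext; simp]
    simp
  | add x y _ _ hx hy =>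
    rw [show LinearMap.mulLeft ℂ (x + y) = LinearMap.mulLeft ℂ x + LinearMap.mulLeft ℂ y from by
      ext; simp [add_mul], TensorProduct.map_add_right, TensorProduct.tmul_add, map_add]
    simp [hx, hy]
  | smul c x _ hx =>
    rw [show LinearMap.mulLeft ℂ (c • x) = c • LinearMap.mulLeft ℂ x from by
      ext; simp, TensorProduct.map_smul_right, TensorProduct.tmul_smul, map_smul]
    simp [hx]

lemma mulB_tmul_one (y : TV θ) (z : TV θ ⊗[ℂ] TV θ) :
    S.mulB (y ⊗ₜ 1) z = TensorProduct.map (LinearMap.mulLeft ℂ y) LinearMap.id z := by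
  refine LinearMap.congr_fun (f := S.mulB (y ⊗ₜ 1)) (TensorProduct.ext ?_) z
  refine hom_ext_words fun v => LinearMap.ext fun d => ?_
  have := S.mulB_spec y d [] v
  simpa [degW_nil, qf_zero_left] using this

lemma Δ_primitive_mul {e : Fin θ → ℕ} {y : TV θ} (hy : y ∈ homogD θ e) (hp : IsPrimitiveIn S y)
    (t : TV θ) : S.Δ (y * t) = primMul q e y (S.Δ t) := by
  rw [S.Δ_mul, hp, map_add, LinearMap.add_apply, mulB_one_tmul S hy, mulB_tmul_one]
  rfl

lemma gen_mem_homogD (a : Fin θ) : gen θ a ∈ homogD θ (δ θ a) :=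
  Submodule.subset_span ⟨[a], by simp [degW_cons, degW_nil], (wordElem_singleton a).symm⟩

lemma Δ_gen_mul (a : Fin θ) (t : TV θ) :
    S.Δ (gen θ a * t) = primMul q (δ θ a) (gen θ a) (S.Δ t) :=
  Δ_primitive_mul S (gen_mem_homogD a) (S.Δ_gen a) t

end Coproduct

section Grading

variable {θ : ℕ}

/-- The projection of the tensor algebra onto its component of total degree `n`. -/
def proj (θ n : ℕ) : TV θ →ₗ[ℂ] TV θ :=
  (wordBasis θ).constr ℂ fun w => if w.length = n then wordElem θ w else 0

lemma proj_wordElem (n : ℕ) (w : List (Fin θ)) :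
    proj θ n (wordElem θ w) = if w.length = n then wordElem θ w else 0 := by
  rw [proj, ← wordBasis_apply, Module.Basis.constr_basis, wordBasis_apply]

lemma wordElem_mem_Wfil {n : ℕ} {w : List (Fin θ)} (hw : w.length ≤ n) :
    wordElem θ w ∈ Wfil θ n :=
  Submodule.subset_span ⟨w, hw, rfl⟩

lemma Wfil_mono {m n : ℕ} (h : m ≤ n) : Wfil θ m ≤ Wfil θ n := by
  refine Submodule.span_mono ?_
  rintro _ ⟨w, hw, rfl⟩
  exact ⟨w, hw.trans h, rfl⟩

lemma wordElem_mem_homogTot {n : ℕ} {w : List (Fin θ)} (hw : w.length = n) :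
    wordElem θ w ∈ homogTot θ n :=
  Submodule.subset_span ⟨w, hw, rfl⟩

lemma homogTot_le_Wfil (n : ℕ) : homogTot θ n ≤ Wfil θ n := by
  refine Submodule.span_mono ?_
  rintro _ ⟨w, hw, rfl⟩
  exact ⟨w, hw.le, rfl⟩

lemma proj_mem_homogTot (n : ℕ) (t : TV θ) : proj θ n t ∈ homogTot θ n := by
  have ht : t ∈ Submodule.span ℂ (Set.range (wordElem θ)) := by rw [span_wordElem]; trivial
  induction ht using Submodule.span_induction with
  | mem x hx =>
    obtain ⟨w, rfl⟩ := hx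
    rw [proj_wordElem]
    split_ifs with h
    · exact wordElem_mem_homogTot h
    · exact zero_mem _
  | zero => simp
  | add x y _ _ hx hy => rw [map_add]; exact add_mem hx hy
  | smul c x _ hx => rw [map_smul]; exact Submodule.smul_mem _ _ hx

lemma proj_of_mem {n : ℕ} {t : TV θ} (ht : t ∈ homogTot θ n) (l : ℕ) :
    proj θ l t = if n = l then t else 0 := by
  induction ht using Submodule.span_induction with
  | mem x hx => obtain ⟨w, rfl, rfl⟩ := hx; exact proj_wordElem _ _
  | zero => simp
  | add x y _ _ hx hy => rw [map_add, hx, hy]; split_ifs <;> simp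
  | smul c x _ hx => rw [map_smul, hx]; split_ifs <;> simp

lemma proj_self {n : ℕ} {t : TV θ} (ht : t ∈ homogTot θ n) : proj θ n t = t := by
  simp [proj_of_mem ht]

lemma proj_eq_zero_of_lt {n l : ℕ} (h : n < l) {t : TV θ} (ht : t ∈ Wfil θ n) :
    proj θ l t = 0 := by
  induction ht using Submodule.span_induction with
  | mem x hx =>
    obtain ⟨w, hw, rfl⟩ := hx
    rw [proj_wordElem, if_neg (by lia)]
  | zero => simp
  | add x y _ _ hx hy => rw [map_add, hx, hy, add_zero]
  | smul c x _ hx => rw [map_smul, hx, smul_zero]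

lemma sub_proj_mem {n : ℕ} {t : TV θ} (ht : t ∈ Wfil θ (n + 1)) :
    t - proj θ (n + 1) t ∈ Wfil θ n := by
  induction ht using Submodule.span_induction with
  | mem x hx =>
    obtain ⟨w, hw, rfl⟩ := hx
    rw [proj_wordElem]
    split_ifs with h
    · simp
    · rw [sub_zero]; exact wordElem_mem_Wfil (by lia)
  | zero => simp
  | add x y _ _ hx hy =>
    rw [map_add, add_sub_add_comm]; exact add_mem hx hy
  | smul c x _ hx => rw [map_smul, ← smul_sub]; exact Submodule.smul_mem _ _ hx

lemma proj_zero_of_mem {t : TV θ} (ht : t ∈ Wfil θ 0) : proj θ 0 t = t := by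
  refine proj_self (Submodule.span_mono ?_ ht)
  rintro _ ⟨w, hw, rfl⟩
  exact ⟨w, by lia, rfl⟩

lemma proj_gen_mul (n : ℕ) (a : Fin θ) (t : TV θ) :
    proj θ (n + 1) (gen θ a * t) = gen θ a * proj θ n t := by
  have h : proj θ (n + 1) ∘ₗ LinearMap.mulLeft ℂ (gen θ a)
      = LinearMap.mulLeft ℂ (gen θ a) ∘ₗ proj θ n := hom_ext_words fun w => ?_
  · simpa using LinearMap.congr_fun h t
  simp only [LinearMap.comp_apply, LinearMap.mulLeft_apply, ← wordElem_cons, proj_wordElem]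
  simp [wordElem_cons]

lemma proj_mul_gen (n : ℕ) (a : Fin θ) (t : TV θ) :
    proj θ (n + 1) (t * gen θ a) = proj θ n t * gen θ a := by
  have h : proj θ (n + 1) ∘ₗ LinearMap.mulRight ℂ (gen θ a)
      = LinearMap.mulRight ℂ (gen θ a) ∘ₗ proj θ n := hom_ext_words fun w => ?_
  · simpa using LinearMap.congr_fun h t
  simp only [LinearMap.comp_apply, LinearMap.mulRight_apply, ← wordElem_singleton,
    ← wordElem_append, proj_wordElem]
  simp [wordElem_append]

lemma mul_mem_Wfil {m n : ℕ} {s t : TV θ} (hs : s ∈ Wfil θ m) (ht : t ∈ Wfil θ n) :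
    s * t ∈ Wfil θ (m + n) := by
  have h : Wfil θ m * Wfil θ n ≤ Wfil θ (m + n) := by
    rw [Wfil, Wfil, Submodule.span_mul_span, Submodule.span_le]
    rintro _ ⟨_, ⟨v, hv, rfl⟩, _, ⟨w, hw, rfl⟩, rfl⟩
    simp only [← wordElem_append]
    exact wordElem_mem_Wfil (by simp; lia)
  exact h (Submodule.mul_mem_mul hs ht)

lemma gen_mem_Wfil (a : Fin θ) : gen θ a ∈ Wfil θ 1 := by
  rw [← wordElem_singleton]; exact wordElem_mem_Wfil (by simp)

lemma exists_mem_Wfil (t : TV θ) : ∃ n, t ∈ Wfil θ n := by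
  induction t using word_induction with
  | one => exact ⟨0, wordElem_mem_Wfil (w := []) (by simp)⟩
  | cons a t ih => obtain ⟨n, hn⟩ := ih; exact ⟨1 + n, mul_mem_Wfil (gen_mem_Wfil a) hn⟩
  | add s t hs ht =>
    obtain ⟨m, hm⟩ := hs
    obtain ⟨n, hn⟩ := ht
    exact ⟨m + n, add_mem (Wfil_mono (by lia) hm) (Wfil_mono (by lia) hn)⟩
  | smul c t ht => obtain ⟨n, hn⟩ := ht; exact ⟨n, Submodule.smul_mem _ _ hn⟩

instance (n : ℕ) : FiniteDimensional ℂ (Wfil θ n) := by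
  refine FiniteDimensional.span_of_finite ℂ
    (((List.finite_length_le (Fin θ) n).image (wordElem θ)).subset ?_)
  rintro _ ⟨w, hw, rfl⟩
  exact ⟨w, hw, rfl⟩

end Grading

section Leading

variable {θ : ℕ} (J : Submodule ℂ (TV θ))

/-- The leading terms of degree `n` of the elements of `J`. -/
def leadDeg (n : ℕ) : Submodule ℂ (TV θ) := (Wfil θ n ⊓ J).map (proj θ n)

/-- The span of the leading terms of the elements of `J`. -/
def lead : Submodule ℂ (TV θ) := ⨆ n, leadDeg J n

lemma leadDeg_le_homogTot (n : ℕ) : leadDeg J n ≤ homogTot θ n := by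
  rintro _ ⟨t, _, rfl⟩
  exact proj_mem_homogTot n t

lemma proj_mem_leadDeg {n : ℕ} {t : TV θ} (ht : t ∈ Wfil θ n) (hJ : t ∈ J) :
    proj θ n t ∈ leadDeg J n := ⟨t, ⟨ht, hJ⟩, rfl⟩

lemma leadDeg_le_lead (n : ℕ) : leadDeg J n ≤ lead J := le_iSup _ n

/-- A family of complements of the leading terms in each degree. -/
structure IsLeadCompl (C : ℕ → Submodule ℂ (TV θ)) : Prop where
  le (n : ℕ) : C n ≤ homogTot θ n
  inf (n : ℕ) : C n ⊓ leadDeg J n = ⊥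
  sup (n : ℕ) : homogTot θ n ≤ C n ⊔ leadDeg J n

lemma exists_isLeadCompl : ∃ C, IsLeadCompl J C := by
  choose D hD using fun n => exists_isCompl (leadDeg J n)
  refine ⟨fun n => D n ⊓ homogTot θ n, fun n => inf_le_right, fun n => ?_, fun n => ?_⟩
  · rw [eq_bot_iff, ← (hD n).inf_eq_bot]
    exact le_inf inf_le_right (inf_le_left.trans inf_le_left)
  · rw [sup_comm, ← sup_inf_assoc_of_le _ (leadDeg_le_homogTot J n), (hD n).sup_eq_top, top_inf_eq]

variable {J}

/-- The graded subspace with the given components. -/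
def gradedSub (C : ℕ → Submodule ℂ (TV θ)) : Submodule ℂ (TV θ) := ⨅ l, (C l).comap (proj θ l)

lemma mem_gradedSub {C : ℕ → Submodule ℂ (TV θ)} {t : TV θ} :
    t ∈ gradedSub C ↔ ∀ l, proj θ l t ∈ C l := by
  simp [gradedSub]

variable {C : ℕ → Submodule ℂ (TV θ)}

lemma IsLeadCompl.le_gradedSub (hC : IsLeadCompl J C) (n : ℕ) : C n ≤ gradedSub C := by
  intro t ht
  rw [mem_gradedSub]
  intro l
  rw [proj_of_mem (hC.le n ht)]
  split_ifs with h
  · exact h ▸ ht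
  · exact zero_mem _

lemma IsLeadCompl.eq_zero (hC : IsLeadCompl J C) {t : TV θ} (ht : t ∈ gradedSub C) (hJ : t ∈ J) : t = 0 := by
  obtain ⟨n, hn⟩ := exists_mem_Wfil t
  have key : ∀ n, t ∈ Wfil θ n → proj θ n t = 0 := fun n hn => by
    have : proj θ n t ∈ C n ⊓ leadDeg J n := ⟨mem_gradedSub.1 ht n, proj_mem_leadDeg J hn hJ⟩
    rwa [hC.inf, Submodule.mem_bot] at this
  induction n with
  | zero => rw [← proj_zero_of_mem hn, key 0 hn]
  | succ n ih => exact ih (by simpa [key _ hn] using sub_proj_mem hn)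

lemma IsLeadCompl.exists_sub_mem (hC : IsLeadCompl J C) {n : ℕ} {t : TV θ} (ht : t ∈ Wfil θ n) :
    ∃ c ∈ gradedSub C ⊓ Wfil θ n, t - c ∈ J := by
  induction n generalizing t with
  | zero =>
    obtain ⟨c, hc, _, ⟨s, ⟨hs, hs'⟩, rfl⟩, h⟩ :=
      Submodule.mem_sup.1 (hC.sup 0 (proj_mem_homogTot 0 t))
    refine ⟨c, ⟨hC.le_gradedSub 0 hc, homogTot_le_Wfil 0 (hC.le 0 hc)⟩, ?_⟩
    rw [proj_zero_of_mem ht, proj_zero_of_mem hs] at h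
    rwa [← h, add_sub_cancel_left]
  | succ n ih =>
    obtain ⟨c, hc, _, ⟨s, ⟨hs, hs'⟩, rfl⟩, h⟩ :=
      Submodule.mem_sup.1 (hC.sup (n + 1) (proj_mem_homogTot (n + 1) t))
    have hcW := homogTot_le_Wfil (n + 1) (hC.le (n + 1) hc)
    have hmem : t - c - s ∈ Wfil θ n := by
      have := sub_proj_mem (sub_mem (sub_mem ht hcW) hs)
      rwa [map_sub, map_sub, proj_self (hC.le _ hc), ← h, add_sub_cancel_left, sub_self,
        sub_zero] at this
    obtain ⟨c', hc', hJ⟩ := ih hmem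
    refine ⟨c + c', ⟨add_mem (hC.le_gradedSub _ hc) hc'.1,
      add_mem hcW (Wfil_mono (Nat.le_succ n) hc'.2)⟩, ?_⟩
    convert add_mem hJ hs' using 1
    abel

lemma IsLeadCompl.isCompl (hC : IsLeadCompl J C) : IsCompl (gradedSub C) J := by
  refine ⟨Submodule.disjoint_def.2 fun t ht hJ => hC.eq_zero ht hJ,
    codisjoint_iff.2 (eq_top_iff.2 fun t _ => ?_)⟩
  obtain ⟨n, hn⟩ := exists_mem_Wfil t
  obtain ⟨c, hc, h⟩ := hC.exists_sub_mem hn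
  exact Submodule.mem_sup.2 ⟨c, hc.1, _, h, by abel⟩

/-- There is a filtered projection with kernel `J`. -/
lemma IsLeadCompl.exists_projection (hC : IsLeadCompl J C) : ∃ P : TV θ →ₗ[ℂ] TV θ, (∀ t ∈ J, P t = 0) ∧
    (∀ t, t - P t ∈ J) ∧ ∀ n, ∀ t ∈ Wfil θ n, P t ∈ Wfil θ n := by
  have key : ∀ c ∈ gradedSub C, ∀ t, t - c ∈ J → (gradedSub C).projection J hC.isCompl t = c := fun c hc t h => by
    rw [← sub_add_cancel t c, map_add, Submodule.projection_apply_of_mem_right _ h,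
      Submodule.projection_apply_of_mem_left _ hc, zero_add]
  refine ⟨(gradedSub C).projection J hC.isCompl, fun t ht => by simp [ht], fun t => ?_, fun n t ht => ?_⟩
  · obtain ⟨n, hn⟩ := exists_mem_Wfil t
    obtain ⟨c, hc, h⟩ := hC.exists_sub_mem hn
    rwa [key c hc.1 t h]
  · obtain ⟨c, hc, h⟩ := hC.exists_sub_mem ht
    rw [key c hc.1 t h]
    exact hc.2

lemma lead_ideal (mul_left : ∀ a x : TV θ, x ∈ J → a * x ∈ J)
    (mul_right : ∀ a x : TV θ, x ∈ J → x * a ∈ J) :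
    (∀ a x : TV θ, x ∈ lead J → a * x ∈ lead J) ∧
      ∀ a x : TV θ, x ∈ lead J → x * a ∈ lead J := by
  constructor
  · intro a x hx
    induction a using word_induction generalizing x with
    | one => simpa
    | cons b t ih =>
      rw [mul_assoc]
      have : lead J ≤ (lead J).comap (LinearMap.mulLeft ℂ (gen θ b)) := by
        refine iSup_le fun n => ?_
        rintro _ ⟨s, ⟨hs, hs'⟩, rfl⟩
        rw [Submodule.mem_comap, LinearMap.mulLeft_apply, ← proj_gen_mul]
        refine leadDeg_le_lead J _ (proj_mem_leadDeg J ?_ (mul_left _ _ hs'))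
        rw [add_comm]
        exact mul_mem_Wfil (gen_mem_Wfil b) hs
      exact this (ih x hx)
    | add s t hs ht => rw [add_mul]; exact add_mem (hs x hx) (ht x hx)
    | smul c t ht => rw [smul_mul_assoc]; exact Submodule.smul_mem _ _ (ht x hx)
  · intro a x hx
    induction a using word_induction generalizing x with
    | one => simpa
    | cons b t ih =>
      rw [← mul_assoc]
      have : lead J ≤ (lead J).comap (LinearMap.mulRight ℂ (gen θ b)) := by
        refine iSup_le fun n => ?_
        rintro _ ⟨s, ⟨hs, hs'⟩, rfl⟩
        rw [Submodule.mem_comap, LinearMap.mulRight_apply, ← proj_mul_gen]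
        exact leadDeg_le_lead J _ (proj_mem_leadDeg J (mul_mem_Wfil hs (gen_mem_Wfil b))
          (mul_right _ _ hs'))
      exact ih _ (this hx)
    | add s t hs ht => rw [mul_add]; exact add_mem (hs x hx) (ht x hx)
    | smul c t ht => rw [mul_smul_comm]; exact Submodule.smul_mem _ _ (ht x hx)

end Leading

section LeadingCoideal

variable {θ : ℕ} {q : Fin θ → Fin θ → ℂˣ}

/-- The component of total degree `n` of the tensor square. -/
def tensTot (θ n : ℕ) : Submodule ℂ (TV θ ⊗[ℂ] TV θ) :=
  Submodule.span ℂ {x | ∃ v w : List (Fin θ), v.length + w.length = n ∧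
    x = wordElem θ v ⊗ₜ[ℂ] wordElem θ w}

lemma primMul_mem_tensTot {n : ℕ} {z : TV θ ⊗[ℂ] TV θ} (hz : z ∈ tensTot θ n) (a : Fin θ) :
    primMul q (δ θ a) (gen θ a) z ∈ tensTot θ (n + 1) := by
  induction hz using Submodule.span_induction with
  | mem x hx =>
    obtain ⟨v, w, rfl, rfl⟩ := hx
    rw [primMul_tmul, twist_wordElem, ← wordElem_cons, ← wordElem_cons, ← TensorProduct.smul_tmul']
    exact add_mem (Submodule.subset_span ⟨_, _, by simp; lia, rfl⟩)
      (Submodule.smul_mem _ _ (Submodule.subset_span ⟨_, _, by simp; lia, rfl⟩))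
  | zero => simp
  | add x y _ _ hx hy => rw [map_add]; exact add_mem hx hy
  | smul c x _ hx => rw [map_smul]; exact Submodule.smul_mem _ _ hx

lemma Δ_wordElem_mem (S : BraidedStr θ q) (w : List (Fin θ)) :
    S.Δ (wordElem θ w) ∈ tensTot θ w.length := by
  induction w with
  | nil =>
    rw [wordElem_nil, S.Δ_one]
    exact Submodule.subset_span ⟨[], [], rfl, rfl⟩
  | cons a w ih =>
    rw [wordElem_cons, Δ_gen_mul]
    exact primMul_mem_tensTot ih a

lemma sum_proj_tensTot {l : ℕ} (n : ℕ) {z : TV θ ⊗[ℂ] TV θ} (hz : z ∈ tensTot θ l) :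
    ∑ p ∈ Finset.HasAntidiagonal.antidiagonal n, TensorProduct.map (proj θ p.1) (proj θ p.2) z
      = if l = n then z else 0 := by
  induction hz using Submodule.span_induction with
  | mem x hx =>
    obtain ⟨v, w, rfl, rfl⟩ := hx
    simp only [TensorProduct.map_tmul, proj_wordElem]
    split_ifs with h
    · rw [Finset.sum_eq_single (v.length, w.length)]
      · simp
      · rintro ⟨a, b⟩ hab hne
        rw [Finset.HasAntidiagonal.mem_antidiagonal] at hab
        by_cases hv : v.length = a
        · rw [if_neg (c := w.length = b) (fun hw => hne (by rw [hv, hw])), TensorProduct.tmul_zero]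
        · rw [if_neg hv, TensorProduct.zero_tmul]
      · intro hn
        exact absurd (Finset.HasAntidiagonal.mem_antidiagonal.2 h) hn
    · refine Finset.sum_eq_zero ?_
      rintro ⟨a, b⟩ hab
      rw [Finset.HasAntidiagonal.mem_antidiagonal] at hab
      by_cases hv : v.length = a
      · rw [if_neg (c := w.length = b) (by simp only at hab; lia), TensorProduct.tmul_zero]
      · rw [if_neg hv, TensorProduct.zero_tmul]
  | zero => simp
  | add x y _ _ hx hy =>
    simp only [map_add, Finset.sum_add_distrib, hx, hy]
    split_ifs <;> simp
  | smul c x _ hx =>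
    simp only [map_smul, ← Finset.smul_sum, hx]
    split_ifs <;> simp

lemma Δ_proj (S : BraidedStr θ q) {n : ℕ} {t : TV θ} (ht : t ∈ Wfil θ n) :
    S.Δ (proj θ n t)
      = ∑ p ∈ Finset.HasAntidiagonal.antidiagonal n, TensorProduct.map (proj θ p.1) (proj θ p.2) (S.Δ t) := by
  induction ht using Submodule.span_induction with
  | mem x hx =>
    obtain ⟨w, -, rfl⟩ := hx
    rw [proj_wordElem, sum_proj_tensTot n (Δ_wordElem_mem S w)]
    split_ifs <;> simp
  | zero => simp
  | add x y _ _ hx hy => simp only [map_add, Finset.sum_add_distrib, hx, hy]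
  | smul c x _ hx => simp only [map_smul, ← Finset.smul_sum, hx]

lemma tmul_mem_mixedPair_left {I J : Submodule ℂ (TV θ)} {a : TV θ} (ha : a ∈ I) (b : TV θ) :
    a ⊗ₜ[ℂ] b ∈ mixedPair I J := Submodule.subset_span (Or.inl ⟨a, b, ha, rfl⟩)

lemma tmul_mem_mixedPair_right {I J : Submodule ℂ (TV θ)} (a : TV θ) {b : TV θ} (hb : b ∈ J) :
    a ⊗ₜ[ℂ] b ∈ mixedPair I J := Submodule.subset_span (Or.inr ⟨a, b, hb, rfl⟩)

lemma proj_sub_map_mem {J : Submodule ℂ (TV θ)} {P : TV θ →ₗ[ℂ] TV θ} (hP : ∀ t, t - P t ∈ J)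
    (hW : ∀ n, ∀ t ∈ Wfil θ n, P t ∈ Wfil θ n) {n l : ℕ} (hl : l ≤ n) {z : TV θ ⊗[ℂ] TV θ}
    (hz : z ∈ tensTot θ l) {p : ℕ × ℕ} (hp : p ∈ Finset.HasAntidiagonal.antidiagonal n) :
    TensorProduct.map (proj θ p.1) (proj θ p.2) (z - TensorProduct.map P P z)
      ∈ mixedSub (lead J) := by
  induction hz using Submodule.span_induction with
  | mem x hx =>
    obtain ⟨v, w, rfl, rfl⟩ := hx
    obtain ⟨a, b⟩ := p
    rw [Finset.HasAntidiagonal.mem_antidiagonal] at hp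
    simp only [map_sub, TensorProduct.map_tmul]
    simp only at hp
    by_cases hv : v.length < a
    · have hv' : wordElem θ v ∈ Wfil θ v.length := wordElem_mem_Wfil le_rfl
      rw [proj_eq_zero_of_lt hv hv', proj_eq_zero_of_lt hv (hW _ _ hv')]
      simp
    by_cases hw : w.length < b
    · have hw' : wordElem θ w ∈ Wfil θ w.length := wordElem_mem_Wfil le_rfl
      rw [proj_eq_zero_of_lt hw hw', proj_eq_zero_of_lt hw (hW _ _ hw')]
      simp
    have key : ∀ (u : List (Fin θ)) (c : ℕ), u.length ≤ c →
        proj θ c (wordElem θ u) - proj θ c (P (wordElem θ u)) ∈ lead J := fun u c hu => by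
      have hu' : wordElem θ u ∈ Wfil θ c := wordElem_mem_Wfil hu
      rw [← map_sub]
      exact leadDeg_le_lead J c (proj_mem_leadDeg J (sub_mem hu' (hW _ _ hu')) (hP _))
    have hva : v.length ≤ a := by lia
    have hwb : w.length ≤ b := by lia
    rw [mixedSub]
    convert add_mem (tmul_mem_mixedPair_left (J := lead J) (key v a hva) (proj θ b (wordElem θ w)))
      (tmul_mem_mixedPair_right (I := lead J) (proj θ a (P (wordElem θ v))) (key w b hwb)) using 1
    rw [TensorProduct.sub_tmul, TensorProduct.tmul_sub]
    abel
  | zero => simp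
  | add x y _ _ hx hy =>
    rw [map_add, add_sub_add_comm, map_add]; exact add_mem hx hy
  | smul c x _ hx =>
    rw [map_smul, ← smul_sub, map_smul]; exact Submodule.smul_mem _ _ hx

lemma lead_coideal (S : BraidedStr θ q) {J : Submodule ℂ (TV θ)} {P : TV θ →ₗ[ℂ] TV θ}
    (hP : ∀ t, t - P t ∈ J) (hW : ∀ n, ∀ t ∈ Wfil θ n, P t ∈ Wfil θ n)
    (hΔ : ∀ t ∈ J, TensorProduct.map P P (S.Δ t) = 0) {t : TV θ} (ht : t ∈ lead J) :
    S.Δ t ∈ mixedSub (lead J) := by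
  suffices lead J ≤ (mixedSub (lead J)).comap S.Δ from this ht
  refine iSup_le fun n => ?_
  rintro _ ⟨t, ⟨ht, htJ⟩, rfl⟩
  rw [Submodule.mem_comap, Δ_proj S ht]
  refine Submodule.sum_mem _ fun p hp => ?_
  have h : Wfil θ n ≤ (mixedSub (lead J)).comap (TensorProduct.map (proj θ p.1) (proj θ p.2) ∘ₗ
      (LinearMap.id - TensorProduct.map P P) ∘ₗ S.Δ) := by
    refine Submodule.span_le.2 ?_
    rintro _ ⟨w, hw, rfl⟩
    exact proj_sub_map_mem hP hW hw (Δ_wordElem_mem S w) hp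
  simpa [hΔ t htJ] using h ht

end LeadingCoideal

section Transfer

variable {θ : ℕ} {q : Fin θ → Fin θ → ℂˣ} {S : BraidedStr θ q} {I : Submodule ℂ (TV θ)}
  {m : ℕ} {q' : Fin m → Fin m → ℂˣ} {y : Fin m → TV θ} {d : Fin m → Fin θ → ℕ}

lemma lift_gen (y : Fin m → TV θ) (a : Fin m) : FreeAlgebra.lift ℂ y (gen m a) = y a := by
  simp [gen]

lemma lift_twist (hy : ∀ a, y a ∈ homogD θ (d a)) (hq : ∀ a b, (q' a b : ℂ) = qf q (d a) (d b))
    (a : Fin m) (t : TV m) :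
    FreeAlgebra.lift ℂ y (twist q' (δ m a) t) = twist q (d a) (FreeAlgebra.lift ℂ y t) := by
  induction t using word_induction with
  | one => simp
  | cons b t ih =>
    rw [map_mul, map_mul, ih, twist_gen, map_smul, lift_gen, map_mul, map_mul, lift_gen,
      twist_homogD q _ _ (hy b), qf_single, hq]
  | add s t hs ht => simp only [map_add, hs, ht]
  | smul c t ht => simp only [map_smul, ht]

lemma Δ_lift (S' : BraidedStr m q') (hy : ∀ a, y a ∈ homogD θ (d a))
    (hq : ∀ a b, (q' a b : ℂ) = qf q (d a) (d b)) (hp : ∀ a, IsPrimitiveIn S (y a)) (t : TV m) :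
    S.Δ (FreeAlgebra.lift ℂ y t) = TensorProduct.map (FreeAlgebra.lift ℂ y).toLinearMap
      (FreeAlgebra.lift ℂ y).toLinearMap (S'.Δ t) := by
  induction t using word_induction with
  | one => simp [S.Δ_one, S'.Δ_one]
  | cons b t ih =>
    rw [map_mul, lift_gen, Δ_primitive_mul S (hy b) (hp b), ih, Δ_gen_mul]
    generalize S'.Δ t = z
    induction z using TensorProduct.induction_on with
    | zero => simp
    | add z z' hz hz' => simp only [map_add, hz, hz']
    | tmul u v =>
      simp [primMul_tmul, lift_twist hy hq, lift_gen]
  | add s t hs ht => simp only [map_add, hs, ht]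
  | smul c t ht => simp only [map_smul, ht]

lemma map_mkQ_mixedSub {z : TV θ ⊗[ℂ] TV θ} (hz : z ∈ mixedSub I) :
    TensorProduct.map I.mkQ I.mkQ z = 0 := by
  suffices mixedSub I ≤ LinearMap.ker (TensorProduct.map I.mkQ I.mkQ) from this hz
  refine Submodule.span_le.2 ?_
  rintro _ (⟨a, b, h, rfl⟩ | ⟨a, b, h, rfl⟩) <;>
    simp [(Submodule.Quotient.mk_eq_zero I).2 h]

/-- A linear map vanishing on the kernel of another one factors through it. -/
lemma exists_factor {V W U : Type*} [AddCommGroup V] [Module ℂ V] [AddCommGroup W] [Module ℂ W]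
    [AddCommGroup U] [Module ℂ U] (f : V →ₗ[ℂ] W) (g : V →ₗ[ℂ] U) (h : ∀ t, f t = 0 → g t = 0) :
    ∃ ρ : W →ₗ[ℂ] U, ρ ∘ₗ f = g := by
  have hle : LinearMap.ker f ≤ LinearMap.ker g := fun t ht => h t ht
  obtain ⟨ρ, hρ⟩ := LinearMap.exists_extend
    ((LinearMap.ker f).liftQ g hle ∘ₗ f.quotKerEquivRange.symm.toLinearMap)
  refine ⟨ρ, LinearMap.ext fun t => ?_⟩
  have h1 := LinearMap.congr_fun hρ ⟨f t, t, rfl⟩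
  have h2 : f.quotKerEquivRange.symm ⟨f t, t, rfl⟩ = (LinearMap.ker f).mkQ t :=
    (LinearEquiv.symm_apply_eq _).2 rfl
  simpa [h2] using h1

/-- Elements generating a polynomially growing quotient have leading terms spanning a
pre-Nichols ideal. -/
lemma isPreNicholsIdeal_lead (hI : IsPreNicholsIdeal S I) (S' : BraidedStr m q')
    (hy : ∀ a, y a ∈ homogD θ (d a))
    (hq : ∀ a b, (q' a b : ℂ) = qf q (d a) (d b)) (hp : ∀ a, IsPrimitiveIn S (y a))
    (hind : ∀ (c : ℂ) (g : Fin m → ℂ), c • (1 : TV θ) + ∑ a, g a • y a ∈ I → c = 0 ∧ ∀ a, g a = 0) :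
    IsPreNicholsIdeal S' (lead (I.comap (FreeAlgebra.lift ℂ y).toLinearMap)) := by
  set J := I.comap (FreeAlgebra.lift ℂ y).toLinearMap with hJ
  have hideal := lead_ideal (J := J) (fun a x hx => by
    simp only [hJ, Submodule.mem_comap, AlgHom.toLinearMap_apply, map_mul] at hx ⊢
    exact hI.mul_left _ _ hx) (fun a x hx => by
    simp only [hJ, Submodule.mem_comap, AlgHom.toLinearMap_apply, map_mul] at hx ⊢
    exact hI.mul_right _ _ hx)
  refine ⟨hideal.1, hideal.2, le_antisymm (iSup_le fun n => ?_) ?_, fun t ht => ?_⟩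
  · have hlow : ∀ t ∈ Wfil m 1, t ∈ J → t = 0 := by
      intro t ht htJ
      have hform : ∃ (c : ℂ) (g : Fin m → ℂ), t = c • (1 : TV m) + ∑ a, g a • gen m a := by
        clear htJ
        induction ht using Submodule.span_induction with
        | mem x hx =>
          obtain ⟨w, hw, rfl⟩ := hx
          match w, hw with
          | [], _ => exact ⟨1, 0, by simp⟩
          | [a], _ =>
            exact ⟨0, Pi.single a 1, by
              simp [wordElem_singleton, Pi.single_apply, ite_smul]⟩
        | zero => exact ⟨0, 0, by simp⟩
        | add u v _ _ hu hv =>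
          obtain ⟨c, g, rfl⟩ := hu
          obtain ⟨c', g', rfl⟩ := hv
          refine ⟨c + c', g + g', ?_⟩
          simp only [add_smul, Pi.add_apply, Finset.sum_add_distrib]
          abel
        | smul b x _ hx =>
          obtain ⟨c, g, rfl⟩ := hx
          exact ⟨b * c, fun a => b * g a, by simp only [mul_smul, smul_add, Finset.smul_sum]⟩
      obtain ⟨c, g, rfl⟩ := hform
      have := hind c g (by simpa [hJ, lift_gen] using htJ)
      simp [this.1, this.2]
    rcases lt_or_ge n 2 with hn | hn
    · rintro _ ⟨t, ⟨ht, htJ⟩, rfl⟩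
      rw [hlow t (Wfil_mono (by lia) ht) htJ, map_zero]
      exact zero_mem _
    · exact fun t ht => Submodule.subset_span
        ⟨leadDeg_le_lead J n ht, n, hn, leadDeg_le_homogTot J n ht⟩
  · exact Submodule.span_le.2 fun t ht => ht.1
  · obtain ⟨C, hC⟩ := exists_isLeadCompl J
    obtain ⟨P, hP0, hP, hW⟩ := hC.exists_projection
    refine lead_coideal S' hP hW (fun t ht => ?_) ht
    obtain ⟨ρ, hρ⟩ := exists_factor (I.mkQ ∘ₗ (FreeAlgebra.lift ℂ y).toLinearMap) P
      (fun t ht => hP0 t (by simpa [hJ] using ht))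
    have hΔ := map_mkQ_mixedSub (hI.coideal _ (Submodule.mem_comap.1 ht))
    rw [AlgHom.toLinearMap_apply, Δ_lift S' hy hq hp] at hΔ
    rw [← hρ, TensorProduct.map_comp, TensorProduct.map_comp, LinearMap.comp_apply,
      LinearMap.comp_apply, hΔ, map_zero]

lemma lift_mem_Wfil {L : ℕ} (hL : ∀ a, y a ∈ Wfil θ L) {n : ℕ} {t : TV m} (ht : t ∈ Wfil m n) :
    FreeAlgebra.lift ℂ y t ∈ Wfil θ (L * n) := by
  induction ht using Submodule.span_induction with
  | mem x hx =>
    obtain ⟨w, hw, rfl⟩ := hx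
    refine Wfil_mono (Nat.mul_le_mul_left L hw) ?_
    clear hw
    induction w with
    | nil => rw [wordElem_nil, map_one]; exact wordElem_mem_Wfil (w := []) (by simp)
    | cons a w ih =>
      rw [wordElem_cons, map_mul, lift_gen, List.length_cons, Nat.mul_succ, add_comm]
      exact mul_mem_Wfil (hL a) ih
  | zero => simp
  | add u v _ _ hu hv => rw [map_add]; exact add_mem hu hv
  | smul c u _ hu => rw [map_smul]; exact Submodule.smul_mem _ _ hu

lemma finrank_lead_le {L : ℕ} (hL : ∀ a, y a ∈ Wfil θ L) (n : ℕ) :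
    Module.finrank ℂ
        ((Wfil m n).map (lead (I.comap (FreeAlgebra.lift ℂ y).toLinearMap)).mkQ)
      ≤ Module.finrank ℂ ((Wfil θ (L * n)).map I.mkQ) := by
  set J := I.comap (FreeAlgebra.lift ℂ y).toLinearMap with hJ
  obtain ⟨C, hC⟩ := exists_isLeadCompl J
  set D := gradedSub C ⊓ Wfil m n with hD
  have : FiniteDimensional ℂ D := Submodule.finiteDimensional_of_le (inf_le_right : D ≤ Wfil m n)
  have h1 : (Wfil m n).map (lead J).mkQ ≤ D.map (lead J).mkQ := by
    rw [Wfil, Submodule.map_span, Submodule.span_le]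
    rintro _ ⟨_, ⟨w, hw, rfl⟩, rfl⟩
    obtain ⟨c, hc, s, hs, h⟩ :=
      Submodule.mem_sup.1 (hC.sup w.length (wordElem_mem_homogTot rfl))
    refine ⟨c, ⟨hC.le_gradedSub _ hc, Wfil_mono hw (homogTot_le_Wfil _ (hC.le _ hc))⟩, ?_⟩
    have hs' : (lead J).mkQ s = 0 := by simpa using leadDeg_le_lead J _ hs
    rw [← h, map_add, hs', add_zero]
  set f := I.mkQ ∘ₗ (FreeAlgebra.lift ℂ y).toLinearMap with hf
  have h2 : D.map f ≤ (Wfil θ (L * n)).map I.mkQ := by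
    rintro _ ⟨t, ht, rfl⟩
    exact ⟨_, lift_mem_Wfil hL ht.2, rfl⟩
  have h3 : Module.finrank ℂ (D.map f) = Module.finrank ℂ D := by
    rw [← LinearMap.range_domRestrict]
    refine LinearMap.finrank_range_of_inj ?_
    rw [← LinearMap.ker_eq_bot, LinearMap.ker_eq_bot']
    rintro ⟨t, ht⟩ h
    exact Subtype.ext (hC.eq_zero ht.1 (by simpa [hJ, hf] using h))
  calc _ ≤ Module.finrank ℂ (D.map (lead J).mkQ) := Submodule.finrank_mono h1
    _ ≤ Module.finrank ℂ D := Submodule.finrank_map_le _ _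
    _ = Module.finrank ℂ (D.map f) := h3.symm
    _ ≤ _ := Submodule.finrank_mono h2

lemma finrank_map_mkQ_anti {J K : Submodule ℂ (TV θ)} (h : J ≤ K) (n : ℕ) :
    Module.finrank ℂ ((Wfil θ n).map K.mkQ) ≤ Module.finrank ℂ ((Wfil θ n).map J.mkQ) := by
  have : (Wfil θ n).map K.mkQ = ((Wfil θ n).map J.mkQ).map (Submodule.factor h) := by
    rw [← Submodule.map_comp, Submodule.factor_comp_mk]
  rw [this]
  exact Submodule.finrank_map_le _ _

/-- Primitive homogeneous elements which are linearly independent modulo a pre-Nichols ideal of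
finite growth span a braided vector space with finite root system. -/
theorem finiteRootSystem_of_primitive (hAAH : AAH) (hI : IsPreNicholsIdeal S I) (hGK : FinGK I)
    (hy : ∀ a, y a ∈ homogD θ (d a))
    (hq : ∀ a b, (q' a b : ℂ) = qf q (d a) (d b)) (hp : ∀ a, IsPrimitiveIn S (y a))
    (hind : ∀ (c : ℂ) (g : Fin m → ℂ), c • (1 : TV θ) + ∑ a, g a • y a ∈ I → c = 0 ∧ ∀ a, g a = 0) :
    FiniteRootSystem q' := by
  refine hAAH m q' (braidedStr q') ?_
  have hle : lead (I.comap (FreeAlgebra.lift ℂ y).toLinearMap) ≤ Jq (braidedStr q') :=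
    le_sSup (isPreNicholsIdeal_lead hI (braidedStr q') hy hq hp hind)
  choose l hl using fun a => exists_mem_Wfil (y a)
  set L := ∑ a, l a
  have hL : ∀ a, y a ∈ Wfil θ L := fun a =>
    Wfil_mono (Finset.single_le_sum (fun _ _ => Nat.zero_le _) (Finset.mem_univ a)) (hl a)
  obtain ⟨C, e, hC⟩ := hGK
  refine ⟨C * (L + 1) ^ e, e, fun n => ?_⟩
  calc _ ≤ _ := finrank_map_mkQ_anti hle n
    _ ≤ _ := finrank_lead_le hL n
    _ ≤ C * (L * n + 1) ^ e := hC _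
    _ ≤ C * ((L + 1) * (n + 1)) ^ e := by gcongr; nlinarith
    _ = _ := by rw [mul_pow, mul_assoc]

end Transfer

section CartanEntries

/-- The set whose minimum is the opposite of a Cartan entry, as a function of the vertex label
`α` and the edge label `p`. -/
def cartanSet (α p : ℂ) : Set ℕ := {n | qnum α (n + 1) * (1 - α ^ n * p) = 0}

/-- The opposite of a Cartan entry. -/
def cartanNum (α p : ℂ) : ℕ := sInf (cartanSet α p)

lemma qnum_eq_zero_iff {α : ℂ} {n : ℕ} : qnum α (n + 1) = 0 ↔ α ≠ 1 ∧ α ^ (n + 1) = 1 := by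
  have h := geom_sum_mul α (n + 1)
  rw [← qnum] at h
  constructor
  · intro h0
    rw [h0, zero_mul, eq_comm, sub_eq_zero] at h
    refine ⟨?_, h⟩
    rintro rfl
    simp only [qnum, one_pow, Finset.sum_const, Finset.card_range, nsmul_eq_mul, mul_one] at h0
    exact Nat.cast_ne_zero.2 (Nat.succ_ne_zero n) h0
  · rintro ⟨h1, h2⟩
    rw [h2, sub_self, mul_eq_zero, sub_eq_zero] at h
    exact h.resolve_right h1

lemma mem_cartanSet {α p : ℂ} {n : ℕ} :
    n ∈ cartanSet α p ↔ (α ≠ 1 ∧ α ^ (n + 1) = 1) ∨ α ^ n * p = 1 := by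
  rw [cartanSet, Set.mem_ofPred_eq, mul_eq_zero, qnum_eq_zero_iff, sub_eq_zero, eq_comm (a := (1 : ℂ))]

lemma not_mem_cartanSet_of_lt {α p : ℂ} {m : ℕ} (h : m < cartanNum α p) : m ∉ cartanSet α p :=
  Nat.notMem_of_lt_sInf h

lemma le_cartanNum {α p : ℂ} {n : ℕ} (h : (cartanSet α p).Nonempty)
    (hn : ∀ m < n, m ∉ cartanSet α p) : n ≤ cartanNum α p := by
  by_contra! hlt
  exact hn _ hlt (Nat.sInf_mem h)

lemma cartanNum_eq {α p : ℂ} {n : ℕ} (h : n ∈ cartanSet α p)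
    (hn : ∀ m < n, m ∉ cartanSet α p) : cartanNum α p = n :=
  le_antisymm (Nat.sInf_le h) (le_cartanNum ⟨n, h⟩ hn)

/-- At a vertex which is not of Cartan type the Cartan entry is given by the order. -/
lemma cartan_dichotomy {α p : ℂ} (h : (cartanSet α p).Nonempty) :
    α ^ cartanNum α p * p = 1 ∨ (α ≠ 1 ∧ α ^ (cartanNum α p + 1) = 1 ∧
      (∀ m < cartanNum α p, α ^ (m + 1) ≠ 1) ∧ ∀ m, α ^ m * p ≠ 1) := by
  by_cases hc : α ^ cartanNum α p * p = 1
  · exact Or.inl hc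
  have h1 := (mem_cartanSet.1 (Nat.sInf_mem h)).resolve_right hc
  change α ≠ 1 ∧ α ^ (cartanNum α p + 1) = 1 at h1
  refine Or.inr ⟨h1.1, h1.2, fun m hm h2 => ?_, fun m hm => ?_⟩
  · exact not_mem_cartanSet_of_lt hm (mem_cartanSet.2 (Or.inl ⟨h1.1, h2⟩))
  · have hmod : α ^ (m % (cartanNum α p + 1)) * p = 1 := by
      rwa [← Nat.mod_add_div m (cartanNum α p + 1), pow_add, pow_mul, h1.2, one_pow, mul_one] at hm
    rcases (Nat.le_of_lt_succ (Nat.mod_lt m (Nat.succ_pos (cartanNum α p)))).lt_or_eq with hlt | heq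
    · exact not_mem_cartanSet_of_lt hlt (mem_cartanSet.2 (Or.inr hmod))
    · exact hc (by rw [← heq]; exact hmod)

lemma cartanNum_reflect {α p : ℂ} (hp : p ≠ 0)
    (h1 : α ≠ 1) (h2 : α ^ (cartanNum α p + 1) = 1) (h3 : ∀ m < cartanNum α p, α ^ (m + 1) ≠ 1)
    (h4 : ∀ m, α ^ m * p ≠ 1) :
    cartanNum α (α ^ 2 / p) = cartanNum α p := by
  refine cartanNum_eq (mem_cartanSet.2 (Or.inl ⟨h1, h2⟩)) fun m hm hmem => ?_
  rcases mem_cartanSet.1 hmem with h | h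
  · exact h3 m hm h.2
  · have h5 : α ^ (m + 2) = p := by field_simp at h; rw [← h]; ring
    refine h4 (cartanNum α p - 1 - m) ?_
    rw [← h5, ← pow_add, ← h2]
    congr 1
    lia

lemma cSet_eq {θ : ℕ} (q : Fin θ → Fin θ → ℂˣ) (i j : Fin θ) :
    cSet q i j = cartanSet (q i i) (qtil q i j) := rfl

lemma cij_eq {θ : ℕ} (q : Fin θ → Fin θ → ℂˣ) {i j : Fin θ} (h : i ≠ j) :
    cij q i j = -(cartanNum (q i i) (qtil q i j) : ℤ) := by
  rw [cij, if_neg h]; rfl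

lemma cij_self {θ : ℕ} (q : Fin θ → Fin θ → ℂˣ) (i : Fin θ) : cij q i i = 2 := by
  rw [cij, if_pos rfl]

lemma qtil_comm {θ : ℕ} (q : Fin θ → Fin θ → ℂˣ) (i j : Fin θ) : qtil q i j = qtil q j i :=
  mul_comm _ _

lemma qtil_ne_zero {θ : ℕ} (q : Fin θ → Fin θ → ℂˣ) (i j : Fin θ) : qtil q i j ≠ 0 := by
  simp [qtil]

lemma reflectMat_self {θ : ℕ} (q : Fin θ → Fin θ → ℂˣ) (i : Fin θ) :
    reflectMat q i i i = q i i := by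
  simp only [reflectMat, cij_self]
  group

lemma qtil_reflectMat_self {θ : ℕ} (q : Fin θ → Fin θ → ℂˣ) {i j : Fin θ} (h : i ≠ j) :
    qtil (reflectMat q i) i j
      = (qtil q i j)⁻¹ * ((q i i : ℂ) ^ (2 * cartanNum (q i i) (qtil q i j)))⁻¹ := by
  simp only [qtil, reflectMat, cij_self, cij_eq q h]
  rw [← qtil]
  set n := cartanNum (q i i) (qtil q i j) with hn
  have e1 : (2 * -(n : ℤ)) = -((2 * n : ℕ) : ℤ) := by push_cast; ring
  have e2 : (-(n : ℤ) * 2) = -((2 * n : ℕ) : ℤ) := by push_cast; ring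
  rw [e1, e2]
  simp only [neg_neg, zpow_neg, zpow_natCast, zpow_ofNat, qtil]
  push_cast
  field_simp
  ring

lemma reflectMat_diag {θ : ℕ} (q : Fin θ → Fin θ → ℂˣ) {i j : Fin θ} (h : i ≠ j) :
    (reflectMat q i j j : ℂ) = q j j * qtil q i j ^ cartanNum (q i i) (qtil q i j) *
      (q i i : ℂ) ^ (cartanNum (q i i) (qtil q i j) * cartanNum (q i i) (qtil q i j)) := by
  simp only [reflectMat, cij_eq q h]
  set n := cartanNum (q i i) (qtil q i j) with hn
  rw [neg_neg, neg_mul_neg, ← Nat.cast_mul]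
  simp only [zpow_natCast]
  push_cast
  rw [qtil]
  ring

lemma qtil_reflectMat {θ : ℕ} (q : Fin θ → Fin θ → ℂˣ) {i j k : Fin θ} (hj : i ≠ j) (hk : i ≠ k) :
    qtil (reflectMat q i) j k = qtil q j k * qtil q i j ^ cartanNum (q i i) (qtil q i k) *
      qtil q i k ^ cartanNum (q i i) (qtil q i j) * (q i i : ℂ) ^
        (2 * (cartanNum (q i i) (qtil q i j) * cartanNum (q i i) (qtil q i k))) := by
  simp only [qtil, reflectMat, cij_eq q hj, cij_eq q hk, neg_neg, neg_mul_neg, ← Nat.cast_mul,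
    zpow_natCast]
  push_cast
  ring

end CartanEntries

section RankTwo

/-- Pairs of Cartan entries forcing a rank two root system to be infinite. -/
def BigPair (a b : ℕ) : Prop := (2 ≤ a ∧ 2 ≤ b) ∨ (1 ≤ a ∧ 4 ≤ b) ∨ (4 ≤ a ∧ 1 ≤ b)

/-- A growth condition on consecutive coordinates `u, v`, depending on the last Cartan entry
`c` that was used. -/
def Growing (c : ℕ) (u v : ℤ) : Prop :=
  0 ≤ u ∧ 1 ≤ v ∧ (4 ≤ c → 2 * u + 1 ≤ v) ∧ (2 ≤ c → u + 1 ≤ v) ∧ u + 1 ≤ 2 * v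

lemma BigPair.symm {a b : ℕ} (h : BigPair a b) : BigPair b a := by
  unfold BigPair at *; omega

lemma Growing.step {c c' : ℕ} {u v : ℤ} (h : Growing c u v) (hc : BigPair c c') :
    Growing c' v (c' * v - u) := by
  obtain ⟨h0, h1, h2, h3, h4⟩ := h
  have hm : ∀ k : ℕ, k ≤ c' → (k : ℤ) * v ≤ c' * v := fun k hk =>
    mul_le_mul_of_nonneg_right (by exact_mod_cast hk) (by lia)
  have hm1 := hm 1
  have hm2 := hm 2
  have hm4 := hm 4
  push_cast at hm1 hm2 hm4
  generalize (c' : ℤ) * v = w at *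
  unfold BigPair at hc
  unfold Growing
  lia

lemma Growing.lt_of_step {c c' c₂ : ℕ} {u v : ℤ} (h : Growing c u v) (hc : BigPair c c')
    (hc' : BigPair c' c₂) : v + 1 ≤ c₂ * (c' * v - u) - v := by
  have h1 := h.step hc
  have h2 := h1.step hc'
  unfold BigPair at hc hc'
  unfold Growing at *
  generalize (c' : ℤ) * v - u = w at *
  generalize (c₂ : ℤ) * w - v = w' at *
  lia

/-- A family of Dynkin diagrams of rank two, symmetric and stable under reflections. -/
structure ReflClosed (D : ℂ → ℂ → ℂ → Prop) : Prop where
  symm : ∀ α p β, D α p β → D β p α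
  refl : ∀ α p β n, D α p β → p ≠ 0 → α ≠ 1 → α ^ (n + 1) = 1 → (∀ m < n, α ^ (m + 1) ≠ 1) →
    (∀ m, α ^ m * p ≠ 1) → D α (α ^ 2 / p) (β * α * p ^ n)

variable {D : ℂ → ℂ → ℂ → Prop}

lemma ReflClosed.reflectMat (hD : ReflClosed D) {q : Fin 2 → Fin 2 → ℂˣ} {i j : Fin 2}
    (hij : i ≠ j) (hq : D (q i i) (qtil q i j) (q j j)) (hr : reflectable q i) :
    D (reflectMat q i i i) (qtil (reflectMat q i) i j) (reflectMat q i j j) ∧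
      cij (PreNicholsPaper.reflectMat q i) i j = cij q i j := by
  have hne : (cartanSet (q i i) (qtil q i j)).Nonempty := hr j hij.symm
  have hp := qtil_ne_zero q i j
  have hα : (q i i : ℂ) ≠ 0 := (q i i).ne_zero
  rw [reflectMat_diag q hij, cij_eq _ hij, qtil_reflectMat_self q hij, reflectMat_self, cij_eq _ hij]
  rcases cartan_dichotomy hne with h | ⟨h1, h2, h3, h4⟩
  · have e1 : (qtil q i j)⁻¹ * ((q i i : ℂ) ^ (2 * cartanNum (q i i) (qtil q i j)))⁻¹
        = qtil q i j := by
      rw [pow_mul', eq_div_of_mul_eq hp h]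
      field_simp
    have e2 : (q j j : ℂ) * qtil q i j ^ cartanNum (q i i) (qtil q i j) *
        (q i i : ℂ) ^ (cartanNum (q i i) (qtil q i j) * cartanNum (q i i) (qtil q i j))
        = q j j := by
      rw [pow_mul, mul_assoc, ← mul_pow, mul_comm (qtil q i j), h, one_pow, mul_one]
    rw [e1, e2]
    exact ⟨hq, rfl⟩
  · set n := cartanNum (q i i) (qtil q i j) with hn
    have e1 : (qtil q i j)⁻¹ * ((q i i : ℂ) ^ (2 * n))⁻¹ = (q i i : ℂ) ^ 2 / qtil q i j := by
      have : (q i i : ℂ) ^ (2 * n) * (q i i : ℂ) ^ 2 = 1 := by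
        rw [← pow_add, ← mul_add_one, pow_mul', h2, one_pow]
      rw [inv_eq_of_mul_eq_one_right this]
      field_simp
    have e2 : (q i i : ℂ) ^ (n * n) = q i i := by
      have : (q i i : ℂ) ^ (n * n) * (q i i : ℂ) ^ n = q i i * (q i i : ℂ) ^ n := by
        rw [← pow_add, ← pow_succ', ← Nat.mul_succ, pow_mul', h2, one_pow]
      exact mul_right_cancel₀ (pow_ne_zero _ hα) this
    rw [e1, e2, mul_right_comm, cartanNum_reflect hp h1 h2 h3 h4]
    exact ⟨hD.refl _ _ _ n hq hp h1 h2 h3 h4, rfl⟩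

theorem ReflClosed.not_finiteRootSystem (hD : ReflClosed D)
    (hbig : ∀ α p β, D α p β → (cartanSet α p).Nonempty → (cartanSet β p).Nonempty →
      BigPair (cartanNum α p) (cartanNum β p))
    {q : Fin 2 → Fin 2 → ℂˣ} (hq : D (q 0 0) (qtil q 0 1) (q 1 1)) : ¬FiniteRootSystem q := by
  rintro ⟨hrefl, hfin⟩
  have h01 : (0 : Fin 2) ≠ 1 := by decide
  have hbig' : ∀ q' : Fin 2 → Fin 2 → ℂˣ, (∃ β, ReachRoot q q' β) →
      D (q' 0 0) (qtil q' 0 1) (q' 1 1) →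
      BigPair (cartanNum (q' 0 0) (qtil q' 0 1)) (cartanNum (q' 1 1) (qtil q' 1 0)) := by
    intro q' hr h
    rw [qtil_comm q' 1 0]
    refine hbig _ _ _ h (hrefl q' 0 hr 1 h01.symm) ?_
    rw [qtil_comm q' 0 1]
    exact hrefl q' 1 hr 0 h01
  have key : ∀ N : ℕ, ∃ q' β, ReachRoot q q' β ∧ D (q' 0 0) (qtil q' 0 1) (q' 1 1) ∧
      Growing (cartanNum (q' 1 1) (qtil q' 1 0)) (β 0) (β 1) ∧ (N : ℤ) < β 1 := by
    intro N
    induction N with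
    | zero => exact ⟨q, _, ReachRoot.simple 1, hq, by simp [Growing], by simp⟩
    | succ N ih =>
      obtain ⟨q', β, hr, hq', hg, hN⟩ := ih
      obtain ⟨hd1, hc1⟩ := hD.reflectMat h01 hq' (hrefl q' 0 ⟨β, hr⟩)
      set q₁ := PreNicholsPaper.reflectMat q' 0 with hq₁
      set β₁ := sRefl q' 0 β with hβ₁
      have hr1 : ReachRoot q q₁ β₁ := hr.reflect 0
      have hd1' : D (q₁ 1 1) (qtil q₁ 1 0) (q₁ 0 0) := by
        rw [qtil_comm]; exact hD.symm _ _ _ hd1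
      obtain ⟨hd2, hc2⟩ := hD.reflectMat h01.symm hd1' (hrefl q₁ 1 ⟨β₁, hr1⟩)
      set q₂ := PreNicholsPaper.reflectMat q₁ 1 with hq₂
      set β₂ := sRefl q₁ 1 β₁ with hβ₂
      have hr2 : ReachRoot q q₂ β₂ := hr1.reflect 1
      have hd2' : D (q₂ 0 0) (qtil q₂ 0 1) (q₂ 1 1) := by
        rw [qtil_comm]; exact hD.symm _ _ _ hd2
      rw [cij_eq _ h01, cij_eq _ h01, neg_inj, Nat.cast_inj] at hc1
      rw [cij_eq _ h01.symm, cij_eq _ h01.symm, neg_inj, Nat.cast_inj] at hc2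
      have hb0 := (hbig' q' ⟨β, hr⟩ hq').symm
      have hb1 := hbig' q₁ ⟨β₁, hr1⟩ hd1
      rw [hc1] at hb1
      have e0 : β₁ 0 = cartanNum (q' 0 0) (qtil q' 0 1) * β 1 - β 0 := by
        simp only [hβ₁, sRefl, if_true, Fin.sum_univ_two, cij_self, cij_eq _ h01]
        ring
      have e1 : β₁ 1 = β 1 := by simp [hβ₁, sRefl]
      have e2 : β₂ 1 = cartanNum (q₁ 1 1) (qtil q₁ 1 0) * β₁ 0 - β 1 := by
        simp only [hβ₂, sRefl, if_true, Fin.sum_univ_two, cij_self, cij_eq _ h01.symm, e1]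
        ring
      have e3 : β₂ 0 = β₁ 0 := by simp [hβ₂, sRefl]
      refine ⟨q₂, β₂, hr2, hd2', ?_, ?_⟩
      · rw [hc2, e3, e2, e0]
        exact (hg.step hb0).step hb1
      · have := hg.lt_of_step hb0 hb1
        rw [← e0, ← e2] at this
        push_cast
        lia
  obtain ⟨M, hM⟩ := (hfin.image fun β => β 1).bddAbove
  obtain ⟨q', β, hr, -, -, hlt⟩ := key M.toNat
  have := hM ⟨β, ⟨q', hr⟩, rfl⟩
  have := Int.self_le_toNat M
  simp only at *
  lia

end RankTwo

section Families

lemma two_le_cartanNum {α p : ℂ} (h : (cartanSet α p).Nonempty) (hp : p ≠ 1) (hα : α ≠ -1)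
    (hαp : α * p ≠ 1) : 2 ≤ cartanNum α p := by
  refine le_cartanNum h fun m hm hmem => ?_
  rw [mem_cartanSet] at hmem
  interval_cases m
  · simp at hmem; tauto
  · simp only [pow_one] at hmem
    rcases hmem with ⟨h1, h2⟩ | h3
    · rcases sq_eq_one_iff.1 h2 with h | h <;> tauto
    · exact hαp h3

/-- The non-symmetric version of the criterion: the family is only given up to exchanging the
two vertices. -/
lemma not_finiteRootSystem_of_family {F : ℂ → ℂ → ℂ → Prop}
    (hleft : ∀ α p β n, F α p β → p ≠ 0 → α ≠ 1 → α ^ (n + 1) = 1 → (∀ m < n, α ^ (m + 1) ≠ 1) →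
      (∀ m, α ^ m * p ≠ 1) → F α (α ^ 2 / p) (β * α * p ^ n))
    (hright : ∀ α p β n, F β p α → p ≠ 0 → α ≠ 1 → α ^ (n + 1) = 1 → (∀ m < n, α ^ (m + 1) ≠ 1) →
      (∀ m, α ^ m * p ≠ 1) → F (β * α * p ^ n) (α ^ 2 / p) α)
    (hbig : ∀ α p β, F α p β → p ≠ 1 ∧ α ≠ -1 ∧ β ≠ -1 ∧ α * p ≠ 1 ∧ β * p ≠ 1)
    {q : Fin 2 → Fin 2 → ℂˣ} (hq : F (q 0 0) (qtil q 0 1) (q 1 1)) : ¬FiniteRootSystem q := by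
  refine ReflClosed.not_finiteRootSystem (D := fun α p β => F α p β ∨ F β p α)
    ⟨fun _ _ _ h => h.symm, fun α p β n h h0 h1 h2 h3 h4 => ?_⟩ ?_ (Or.inl hq)
  · rcases h with h | h
    · exact Or.inl (hleft α p β n h h0 h1 h2 h3 h4)
    · exact Or.inr (hright α p β n h h0 h1 h2 h3 h4)
  · rintro α p β (h | h) hα hβ <;> obtain ⟨h1, h2, h3, h4, h5⟩ := hbig _ _ _ h
    · exact Or.inl ⟨two_le_cartanNum hα h1 h2 h4, two_le_cartanNum hβ h1 h3 h5⟩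
    · exact Or.inl ⟨two_le_cartanNum hα h1 h3 h5, two_le_cartanNum hβ h1 h2 h4⟩

lemma not_finiteRootSystem_of_pow_six {q : Fin 2 → Fin 2 → ℂˣ} (h0 : (q 0 0 : ℂ) ^ 6 = 1)
    (hp : qtil q 0 1 ^ 6 = 1) (hp1 : qtil q 0 1 ≠ 1) (h12 : (q 1 1 : ℂ) ^ 12 ≠ 1)
    (h18 : (q 1 1 : ℂ) ^ 18 ≠ 1) : ¬FiniteRootSystem q := by
  obtain ⟨R, hR⟩ : ∃ R, (q 1 1 : ℂ) ^ 6 = R := ⟨_, rfl⟩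
  have hR2 : R ^ 2 ≠ 1 := by rw [← hR, ← pow_mul]; exact h12
  have hR3 : R ^ 3 ≠ 1 := by rw [← hR, ← pow_mul]; exact h18
  have hR1 : R ≠ 1 := by rintro rfl; simp at hR2
  have hfour : ∀ β p : ℂ, (cartanSet β p).Nonempty → β ^ 6 = R → p ^ 6 = 1 → p ≠ 1 →
      4 ≤ cartanNum β p := by
    intro β p hne hβ hp6 hp1
    refine le_cartanNum hne fun m hm hmem => ?_
    rcases mem_cartanSet.1 hmem with ⟨h1, h2⟩ | h1
    · interval_cases m
      · grind
      · grind
      · grind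
      · grind
    · have : R ^ m = 1 := by
        have := congrArg (· ^ 6) h1
        rwa [mul_pow, hp6, mul_one, pow_right_comm, hβ, one_pow] at this
      interval_cases m <;> simp_all
  have hone : ∀ α p : ℂ, (cartanSet α p).Nonempty → p ≠ 1 → 1 ≤ cartanNum α p := by
    intro α p hne hp1
    refine le_cartanNum hne fun m hm hmem => ?_
    obtain rfl : m = 0 := by lia
    rw [mem_cartanSet] at hmem
    simp at hmem
    tauto
  have hp' : ∀ (α p : ℂ) (n : ℕ), p ≠ 0 → α ≠ 1 → α ^ (n + 1) = 1 → (∀ m, α ^ m * p ≠ 1) →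
      α ^ 2 / p ≠ 1 := by
    intro α p n h0 h1 h2 h4 h
    obtain ⟨n, rfl⟩ : ∃ l, n = l + 1 := Nat.exists_eq_succ_of_ne_zero (by rintro rfl; simp_all)
    refine h4 n ?_
    rw [div_eq_one_iff_eq h0] at h
    rw [← h, ← pow_add, h2]
  have hpow : ∀ (α β p : ℂ) (n : ℕ), (β * α * p ^ n) ^ 6 = β ^ 6 * α ^ 6 * (p ^ 6) ^ n := by
    intros; ring
  refine ReflClosed.not_finiteRootSystem (D := fun α p β =>
    (α ^ 6 = 1 ∧ p ^ 6 = 1 ∧ p ≠ 1 ∧ β ^ 6 = R) ∨ (β ^ 6 = 1 ∧ p ^ 6 = 1 ∧ p ≠ 1 ∧ α ^ 6 = R) ∨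
      (α ^ 6 = R ∧ β ^ 6 = R ∧ p ^ 6 = R ^ 2)) ⟨fun _ _ _ h => ?_,
        fun α p β n h h0 h1 h2 h3 h4 => ?_⟩ ?_ (Or.inl ⟨h0, hp, hp1, hR⟩)
  · rcases h with h | h | ⟨h5, h6, h7⟩
    · exact Or.inr (Or.inl h)
    · exact Or.inl h
    · exact Or.inr (Or.inr ⟨h6, h5, h7⟩)
  · have hp1' := hp' α p n h0 h1 h2 h4
    have e : (α ^ 2 / p) ^ 6 = (α ^ 6) ^ 2 / p ^ 6 := by rw [div_pow]; ring
    simp only [hpow, e]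
    rcases h with ⟨h5, h6, h7, h8⟩ | ⟨h5, h6, h7, h8⟩ | ⟨h5, h6, h7⟩
    · left; simp [*]
    · right; right; simp [*]
    · right; left
      have : R ^ (n + 1) = 1 := by rw [← h5, pow_right_comm, h2, one_pow]
      have hR0 : R ≠ 0 := by rintro rfl; simp at this
      refine ⟨?_, ?_, hp1', h5⟩
      · rw [h5, h6, h7]
        linear_combination (R ^ (n + 1) + 1) * this
      · rw [h5, h7, div_self (pow_ne_zero _ hR0)]
  · rintro α p β (⟨h5, h6, h7, h8⟩ | ⟨h5, h6, h7, h8⟩ | ⟨h5, h6, h7⟩) hα hβ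
    · exact Or.inr (Or.inl ⟨hone _ _ hα h7, hfour _ _ hβ h8 h6 h7⟩)
    · exact Or.inr (Or.inr ⟨hfour _ _ hα h8 h6 h7, hone _ _ hβ h7⟩)
    · have hp1 : p ≠ 1 := by
        rintro rfl
        exact hR2 (by rw [← h7, one_pow])
      have hn : ∀ γ : ℂ, γ ^ 6 = R → γ ≠ -1 ∧ γ * p ≠ 1 := by
        refine fun γ hγ => ⟨?_, fun h => hR3 ?_⟩
        · rintro rfl; norm_num at hγ; exact hR1 hγ.symm
        · rw [pow_succ', ← h7, ← hγ, ← mul_pow, h, one_pow]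
      exact Or.inl ⟨two_le_cartanNum hα hp1 (hn α h5).1 (hn α h5).2,
        two_le_cartanNum hβ hp1 (hn β h6).1 (hn β h6).2⟩

lemma not_finiteRootSystem_of_pow_nine {q : Fin 2 → Fin 2 → ℂˣ} (h0 : (q 0 0 : ℂ) ^ 9 = 1)
    (hp : qtil q 0 1 ^ 9 = -1) (h1 : (q 1 1 : ℂ) ^ 9 = 1) : ¬FiniteRootSystem q := by
  have heven : ∀ (α : ℂ) (n : ℕ), α ^ 9 = 1 → α ^ (n + 1) = 1 → (∀ m < n, α ^ (m + 1) ≠ 1) →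
      Even n := by
    intro α n h9 hn hm
    have ho : orderOf α = n + 1 := by
      rw [orderOf_eq_iff (Nat.succ_pos n)]
      refine ⟨hn, fun m hmn h0 => ?_⟩
      obtain ⟨m, rfl⟩ := Nat.exists_eq_succ_of_ne_zero h0.ne'
      exact hm m (by lia)
    have hd : Odd (n + 1) := (ho ▸ orderOf_dvd_of_pow_eq_one h9 : n + 1 ∣ 9).elim fun c hc =>
      Nat.Odd.of_mul_left (n := c) (by rw [← hc]; decide)
    rcases Nat.even_or_odd n with h | h
    · exact h
    · exact absurd hd (Nat.not_odd_iff_even.2 h.add_one)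
  have hpow : ∀ (α β p : ℂ) (n : ℕ), (β * α * p ^ n) ^ 9 = β ^ 9 * α ^ 9 * (p ^ 9) ^ n := by
    intros; ring
  have e : ∀ α p : ℂ, (α ^ 2 / p) ^ 9 = (α ^ 9) ^ 2 / p ^ 9 := by
    intro α p; rw [div_pow]; ring
  have hbig : ∀ α p : ℂ, α ^ 9 = 1 → p ^ 9 = -1 → α ≠ -1 ∧ α * p ≠ 1 := by
    refine fun α p h h' => ⟨?_, fun h3 => ?_⟩
    · rintro rfl; norm_num at h
    · have : (α * p) ^ 9 = -1 := by rw [mul_pow, h, h', one_mul]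
      rw [h3] at this; norm_num at this
  refine not_finiteRootSystem_of_family (F := fun α p β => α ^ 9 = 1 ∧ p ^ 9 = -1 ∧ β ^ 9 = 1)
    ?_ ?_ ?_ ⟨h0, hp, h1⟩
  · rintro α p β n ⟨h5, h6, h7⟩ - - h8 h9 -
    simp [hpow, e, h5, h6, h7, (heven α n h5 h8 h9).neg_one_pow]
  · rintro α p β n ⟨h5, h6, h7⟩ - - h8 h9 -
    simp [hpow, e, h5, h6, h7, (heven α n h7 h8 h9).neg_one_pow]
  · rintro α p β ⟨h5, h6, h7⟩
    refine ⟨?_, (hbig _ _ h5 h6).1, (hbig _ _ h7 h6).1, (hbig _ _ h5 h6).2, (hbig _ _ h7 h6).2⟩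
    rintro rfl; norm_num at h6

variable {ζ : ℂ}

lemma eq_of_cube_eq_one (hζ : ζ ^ 2 + ζ + 1 = 0) {t : ℂ} (ht : t ^ 3 = 1) :
    t = 1 ∨ t = ζ ∨ t = ζ ^ 2 := by
  have : (t - 1) * ((t - ζ) * (t - ζ ^ 2)) = 0 := by
    linear_combination ht + (-t ^ 2 + t + (t - 1) * (ζ - 1) * (1 - t)) * hζ + t * (t - 1) * (ζ - 1) * hζ
  simpa [sub_eq_zero] using this

lemma eq_two_of_cube (hζ : ζ ^ 2 + ζ + 1 = 0) {n : ℕ} (h : ζ ^ (n + 1) = 1)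
    (hm : ∀ m < n, ζ ^ (m + 1) ≠ 1) : n = 2 := by
  have : n ≤ 2 := by
    by_contra! h2
    exact hm 2 h2 (by linear_combination (ζ - 1) * hζ)
  interval_cases n
  · grind
  · grind
  · rfl

lemma eq_three_of_sq {s : ℂ} (hs : s ^ 2 = -1) {n : ℕ} (h : s ^ (n + 1) = 1)
    (hm : ∀ m < n, s ^ (m + 1) ≠ 1) : n = 3 := by
  have : n ≤ 3 := by
    by_contra! h2
    exact hm 3 h2 (by linear_combination (s ^ 2 - 1) * hs)
  interval_cases n
  · grind
  · grind
  · grind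
  · rfl

lemma finite_zeta_zeta (hζ : ζ ^ 2 + ζ + 1 = 0) {q : Fin 2 → Fin 2 → ℂˣ} (h0 : (q 0 0 : ℂ) = ζ)
    (hp : qtil q 0 1 = ζ) (hfin : FiniteRootSystem q) :
    (q 1 1 : ℂ) = -1 ∨ (q 1 1 : ℂ) = ζ ^ 2 := by
  have hζ0 : ζ ≠ 0 := by rintro rfl; simp at hζ
  have hζ1 : ζ ≠ 1 := by rintro rfl; norm_num at hζ
  have hζ3 : ζ ^ 3 = 1 := by linear_combination (ζ - 1) * hζ
  generalize hs : (q 1 1 : ℂ) = s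
  by_contra! hcon
  obtain ⟨hs1, hs2⟩ := hcon
  have hsζ : s * ζ ≠ 1 := fun h => hs2 (by linear_combination ζ ^ 2 * h - s * hζ3)
  have hζζ : ζ * ζ ≠ 1 := by grind
  have hζn : ζ ≠ -1 := by grind
  by_cases hC : ∃ m, s ^ m * ζ = 1
  · obtain ⟨M, hM⟩ := hC
    refine not_finiteRootSystem_of_family (F := fun α p β => ζ = α ∧ ζ = p ∧ s = β) ?_ ?_ ?_
      ⟨h0.symm, hp.symm, hs.symm⟩ hfin
    · rintro _ _ _ n ⟨rfl, rfl, rfl⟩ - - - - h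
      exact absurd (by linear_combination hζ3) (h 2)
    · rintro _ _ _ n ⟨rfl, rfl, rfl⟩ - - - - h
      exact absurd hM (h M)
    · rintro _ _ _ ⟨rfl, rfl, rfl⟩
      exact ⟨hζ1, hζn, hs1, hζζ, hsζ⟩
  push Not at hC
  have hsn1 : s ≠ 1 := by
    rintro rfl
    obtain ⟨n, hn⟩ := hfin.1 q 1 ⟨_, ReachRoot.simple 0⟩ 0 (by decide)
    rw [cSet_eq, mem_cartanSet, hs, qtil_comm, hp] at hn
    simp [hζ1] at hn
  have hs4 : s ^ 2 = -1 := by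
    by_cases h12 : s ^ 12 = 1
    · have h4 : s ^ 4 = 1 := by
        by_contra h4
        rcases eq_of_cube_eq_one hζ (show (s ^ 4) ^ 3 = 1 by rw [← pow_mul, h12]) with h | h | h
        · exact h4 h
        · exact hC 8 (by linear_combination (s ^ 4 + ζ) * ζ * h + hζ3)
        · exact hC 4 (by linear_combination ζ * h + hζ3)
      have : (s ^ 2 + 1) * ((s - 1) * (s + 1)) = 0 := by linear_combination h4
      rcases mul_eq_zero.1 this with h | h
      · exact eq_neg_of_add_eq_zero_left h
      rcases mul_eq_zero.1 h with h | h
      · exact absurd (sub_eq_zero.1 h) hsn1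
      · exact absurd (eq_neg_of_add_eq_zero_left h) hs1
    · by_cases h18 : s ^ 18 = 1
      · have h6 : s ^ 6 = 1 := by
          by_contra h4
          rcases eq_of_cube_eq_one hζ (show (s ^ 6) ^ 3 = 1 by rw [← pow_mul, h18])
            with h | h | h
          · exact h4 h
          · exact hC 12 (by linear_combination (s ^ 6 + ζ) * ζ * h + hζ3)
          · exact hC 6 (by linear_combination ζ * h + hζ3)
        exact absurd (by linear_combination (s ^ 6 + 1) * h6) h12
      · refine absurd hfin (not_finiteRootSystem_of_pow_six ?_ ?_ ?_ (hs ▸ h12) (hs ▸ h18))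
        · rw [h0]; linear_combination (ζ ^ 3 + 1) * hζ3
        · rw [hp]; linear_combination (ζ ^ 3 + 1) * hζ3
        · rwa [hp]
  have hs0 : s ≠ 0 := by rintro rfl; norm_num at hs4
  refine not_finiteRootSystem_of_family (F := fun α p β =>
    s = β ∧ ((ζ = α ∧ ζ = p) ∨ (s * ζ = α ∧ -ζ ^ 2 = p))) ?_ ?_ ?_
      ⟨hs.symm, Or.inl ⟨h0.symm, hp.symm⟩⟩ hfin
  · rintro _ _ _ n ⟨rfl, ⟨rfl, rfl⟩ | ⟨rfl, rfl⟩⟩ - - - - h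
    · exact absurd (by linear_combination hζ3) (h 2)
    · exact absurd (by linear_combination -ζ ^ 12 * (s ^ 8 - s ^ 6 + s ^ 4 - s ^ 2 + 1) * hs4 +
        (ζ ^ 9 + ζ ^ 6 + ζ ^ 3 + 1) * hζ3) (h 10)
  · rintro _ _ _ n ⟨rfl, ⟨rfl, rfl⟩ | ⟨rfl, rfl⟩⟩ - - h2 h3 -
    · obtain rfl := eq_three_of_sq hs4 h2 h3
      exact ⟨rfl, Or.inr ⟨by grind, by field_simp; grind⟩⟩
    · obtain rfl := eq_three_of_sq hs4 h2 h3
      exact ⟨rfl, Or.inl ⟨by grind, by field_simp; grind⟩⟩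
  · rintro _ _ _ ⟨rfl, ⟨rfl, rfl⟩ | ⟨rfl, rfl⟩⟩
    · exact ⟨hζ1, hζn, hs1, hζζ, hsζ⟩
    · refine ⟨?_, ?_, ?_, ?_, ?_⟩ <;> grind

lemma finite_zeta_neg_zeta (hζ : ζ ^ 2 + ζ + 1 = 0) {q : Fin 2 → Fin 2 → ℂˣ}
    (h0 : (q 0 0 : ℂ) = ζ) (hp : qtil q 0 1 = -ζ) (hfin : FiniteRootSystem q) :
    (q 1 1 : ℂ) = -1 ∨ (q 1 1 : ℂ) = -ζ ^ 2 := by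
  have hζ0 : ζ ≠ 0 := by rintro rfl; simp at hζ
  have hζ1 : ζ ≠ 1 := by rintro rfl; norm_num at hζ
  have hζ3 : ζ ^ 3 = 1 := by linear_combination (ζ - 1) * hζ
  generalize hs : (q 1 1 : ℂ) = r
  by_contra! hcon
  obtain ⟨hr1, hr2⟩ := hcon
  have hrζ : r * -ζ ≠ 1 := fun h => hr2 (by linear_combination -ζ ^ 2 * h - r * hζ3)
  have hζζ : ζ * -ζ ≠ 1 := by grind
  have hζn : ζ ≠ -1 := by grind
  have hζn1 : -ζ ≠ 1 := by grind
  by_cases h9 : r ^ 9 = 1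
  · refine not_finiteRootSystem_of_pow_nine ?_ ?_ (hs ▸ h9) hfin
    · rw [h0]; linear_combination (ζ ^ 6 + ζ ^ 3 + 1) * hζ3
    · rw [hp]; linear_combination -(ζ ^ 6 + ζ ^ 3 + 1) * hζ3
  have hself : -ζ = ζ ^ 2 / -ζ := by field_simp
  by_cases hC : ∃ m, r ^ m * -ζ = 1
  · obtain ⟨M, hM⟩ := hC
    refine not_finiteRootSystem_of_family (F := fun α p β => ζ = α ∧ -ζ = p ∧ r = β) ?_ ?_ ?_
      ⟨h0.symm, hp.symm, hs.symm⟩ hfin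
    · rintro _ _ _ n ⟨rfl, rfl, rfl⟩ - - h2 h3 -
      obtain rfl := eq_two_of_cube hζ h2 h3
      exact ⟨rfl, hself, by linear_combination -r * hζ3⟩
    · rintro _ _ _ n ⟨rfl, rfl, rfl⟩ - - - - h
      exact absurd hM (h M)
    · rintro _ _ _ ⟨rfl, rfl, rfl⟩
      exact ⟨hζn1, hζn, hr1, hζζ, hrζ⟩
  push Not at hC
  have hr4 : r ^ 2 = -1 := by
    have neg_cases : ∀ t : ℂ, t ^ 3 = -1 → t = -1 ∨ t = -ζ ∨ t = -ζ ^ 2 := by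
      intro t ht
      simp only [← neg_eq_iff_eq_neg]
      exact eq_of_cube_eq_one hζ (by linear_combination -ht)
    have h3 : r ^ 3 ≠ -1 := by
      intro h3
      rcases neg_cases r h3 with h | h | h
      · exact hr1 h
      · exact hC 5 (by rw [h]; linear_combination (ζ ^ 3 + 1) * hζ3)
      · exact hr2 h
    have h3' : r ^ 3 ≠ 1 := fun h => h9 (by linear_combination (r ^ 6 + r ^ 3 + 1) * h)
    by_cases h12 : r ^ 12 = 1
    · have h6 : (r ^ 6 + 1) * ((r ^ 3 + 1) * (r ^ 3 - 1)) = 0 := by linear_combination h12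
      simp only [mul_eq_zero, sub_eq_zero, add_eq_zero_iff_eq_neg, h3, h3', or_false] at h6
      rcases neg_cases (r ^ 2) (by rw [← h6, ← pow_mul]) with h | h | h
      · exact h
      · exact absurd (by linear_combination -ζ * ((r ^ 2) ^ 4 + (r ^ 2) ^ 3 * (-ζ) +
          (r ^ 2) ^ 2 * ζ ^ 2 - r ^ 2 * ζ ^ 3 + ζ ^ 4) * h + (ζ ^ 3 + 1) * hζ3) (hC 10)
      · exact absurd (by linear_combination -ζ * h + hζ3) (hC 2)
    · by_cases h18 : r ^ 18 = 1
      · have h9' : (r ^ 9 - 1) * (r ^ 9 + 1) = 0 := by linear_combination h18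
        simp only [mul_eq_zero, sub_eq_zero, add_eq_zero_iff_eq_neg, h9, false_or] at h9'
        rcases neg_cases (r ^ 3) (by rw [← h9', ← pow_mul]) with h | h | h
        · exact absurd h h3
        · exact absurd (by linear_combination -ζ * ((r ^ 3) ^ 4 + (r ^ 3) ^ 3 * (-ζ) +
            (r ^ 3) ^ 2 * ζ ^ 2 - r ^ 3 * ζ ^ 3 + ζ ^ 4) * h + (ζ ^ 3 + 1) * hζ3) (hC 15)
        · exact absurd (by linear_combination -ζ * h + hζ3) (hC 3)
      · refine absurd hfin (not_finiteRootSystem_of_pow_six ?_ ?_ ?_ (hs ▸ h12) (hs ▸ h18))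
        · rw [h0]; linear_combination (ζ ^ 3 + 1) * hζ3
        · rw [hp]; linear_combination (ζ ^ 3 + 1) * hζ3
        · rwa [hp]
  have hr0 : r ≠ 0 := by rintro rfl; norm_num at hr4
  refine not_finiteRootSystem_of_family (F := fun α p β =>
    r = β ∧ ((ζ = α ∧ -ζ = p) ∨ (-(r * ζ) = α ∧ ζ ^ 2 = p))) ?_ ?_ ?_
      ⟨hs.symm, Or.inl ⟨h0.symm, hp.symm⟩⟩ hfin
  · rintro _ _ _ n ⟨rfl, ⟨rfl, rfl⟩ | ⟨rfl, rfl⟩⟩ - - h2 h3 h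
    · obtain rfl := eq_two_of_cube hζ h2 h3
      exact ⟨by linear_combination -r * hζ3, Or.inl ⟨rfl, hself⟩⟩
    · exact absurd (by linear_combination (r ^ 2 - 1) * ζ ^ 6 * hr4 + (ζ ^ 3 + 1) * hζ3) (h 4)
  · rintro _ _ _ n ⟨rfl, ⟨rfl, rfl⟩ | ⟨rfl, rfl⟩⟩ - - h2 h3 -
    · obtain rfl := eq_three_of_sq hr4 h2 h3
      exact ⟨rfl, Or.inr ⟨by grind, by field_simp; grind⟩⟩
    · obtain rfl := eq_three_of_sq hr4 h2 h3
      exact ⟨rfl, Or.inl ⟨by grind, by field_simp; grind⟩⟩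
  · rintro _ _ _ ⟨rfl, ⟨rfl, rfl⟩ | ⟨rfl, rfl⟩⟩
    · exact ⟨hζn1, hζn, hr1, hζζ, hrζ⟩
    · refine ⟨?_, ?_, ?_, ?_, ?_⟩ <;> grind

lemma not_finite_zeta_neg_one (hζ : ζ ^ 2 + ζ + 1 = 0) {q : Fin 2 → Fin 2 → ℂˣ}
    (h0 : (q 0 0 : ℂ) = ζ) (hp : qtil q 0 1 = -1) (h1 : (q 1 1 : ℂ) = -ζ) :
    ¬FiniteRootSystem q := by
  have hζ0 : ζ ≠ 0 := by rintro rfl; simp at hζ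
  refine not_finiteRootSystem_of_family (F := fun α p β =>
    ζ = α ∧ ((-1 = p ∧ -ζ = β) ∨ (-ζ ^ 2 = p ∧ -ζ ^ 2 = β))) ?_ ?_ ?_ ⟨h0.symm, Or.inl ⟨hp.symm, h1.symm⟩⟩
  · rintro _ _ _ n ⟨rfl, ⟨rfl, rfl⟩ | ⟨rfl, rfl⟩⟩ - - h2 h3 -
    · obtain rfl := eq_two_of_cube hζ h2 h3
      exact ⟨rfl, Or.inr ⟨by simp [div_neg], by ring⟩⟩
    · obtain rfl := eq_two_of_cube hζ h2 h3
      exact ⟨rfl, Or.inl ⟨by field_simp, by grind⟩⟩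
  · rintro _ _ _ n ⟨rfl, ⟨rfl, rfl⟩ | ⟨rfl, rfl⟩⟩ - - - - h
    · exact absurd (by grind) (h 3)
    · exact absurd (by grind) (h 5)
  · rintro _ _ _ ⟨rfl, ⟨rfl, rfl⟩ | ⟨rfl, rfl⟩⟩ <;> refine ⟨?_, ?_, ?_, ?_, ?_⟩ <;> grind

end Families

section RankThree

variable {ζ : ℂ}

/-- The Dynkin diagram `ζ² —ζ— ζ —(-ζ)— (-ζ²)` with middle vertex `0`. -/
def IsAffineDiagram (ζ : ℂ) (q : Fin 3 → Fin 3 → ℂˣ) : Prop :=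
  (q 0 0 : ℂ) = ζ ∧ (q 1 1 : ℂ) = ζ ^ 2 ∧ (q 2 2 : ℂ) = -ζ ^ 2 ∧ qtil q 0 1 = ζ ∧
    qtil q 0 2 = -ζ ∧ qtil q 1 2 = 1

lemma IsAffineDiagram.cartanNum_values (hζ : ζ ^ 2 + ζ + 1 = 0) :
    cartanNum ζ ζ = 2 ∧ cartanNum ζ (-ζ) = 2 ∧ cartanNum (ζ ^ 2) ζ = 1 ∧
      cartanNum (-ζ ^ 2) (-ζ) = 1 ∧ cartanNum (ζ ^ 2) 1 = 0 ∧ cartanNum (-ζ ^ 2) 1 = 0 := by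
  have hζ3 : ζ ^ 3 = 1 := by linear_combination (ζ - 1) * hζ
  have hζ1 : ζ ≠ 1 := by rintro rfl; norm_num at hζ
  have hζn1 : -ζ ≠ 1 := by grind
  refine ⟨?_, ?_, ?_, ?_, ?_, ?_⟩
  · refine cartanNum_eq (mem_cartanSet.2 (Or.inr (by linear_combination hζ3))) fun m hm => ?_
    rw [mem_cartanSet]
    interval_cases m <;> grind
  · refine cartanNum_eq (mem_cartanSet.2 (Or.inl ⟨hζ1, hζ3⟩)) fun m hm => ?_
    rw [mem_cartanSet]
    interval_cases m <;> grind
  · refine cartanNum_eq (mem_cartanSet.2 (Or.inr (by linear_combination hζ3))) fun m hm => ?_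
    rw [mem_cartanSet]
    interval_cases m; grind
  · refine cartanNum_eq (mem_cartanSet.2 (Or.inr (by linear_combination hζ3))) fun m hm => ?_
    rw [mem_cartanSet]
    interval_cases m; grind
  · exact cartanNum_eq (mem_cartanSet.2 (Or.inr (by simp))) (by simp)
  · exact cartanNum_eq (mem_cartanSet.2 (Or.inr (by simp))) (by simp)

lemma IsAffineDiagram.cartanNum_eq (hζ : ζ ^ 2 + ζ + 1 = 0) {q : Fin 3 → Fin 3 → ℂˣ}
    (h : IsAffineDiagram ζ q) :
    cartanNum (q 0 0) (qtil q 0 1) = 2 ∧ cartanNum (q 0 0) (qtil q 0 2) = 2 ∧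
      cartanNum (q 1 1) (qtil q 1 0) = 1 ∧ cartanNum (q 1 1) (qtil q 1 2) = 0 ∧
      cartanNum (q 2 2) (qtil q 2 0) = 1 ∧ cartanNum (q 2 2) (qtil q 2 1) = 0 := by
  obtain ⟨h0, h1, h2, h3, h4, h5⟩ := h
  obtain ⟨e1, e2, e3, e4, e5, e6⟩ := IsAffineDiagram.cartanNum_values hζ
  rw [qtil_comm q 1 0, qtil_comm q 2 0, qtil_comm q 2 1, h0, h1, h2, h3, h4, h5]
  exact ⟨e1, e2, e3, e5, e4, e6⟩

lemma IsAffineDiagram.reflectMat (hζ : ζ ^ 2 + ζ + 1 = 0) {q : Fin 3 → Fin 3 → ℂˣ}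
    (h : IsAffineDiagram ζ q) (i : Fin 3) : IsAffineDiagram ζ (reflectMat q i) := by
  have hζ3 : ζ ^ 3 = 1 := by linear_combination (ζ - 1) * hζ
  have hζ0 : ζ ≠ 0 := by rintro rfl; simp at hζ
  obtain ⟨e1, e2, e3, e4, e5, e6⟩ := h.cartanNum_eq hζ
  obtain ⟨h0, h1, h2, h3, h4, h5⟩ := h
  have h01 : (0 : Fin 3) ≠ 1 := by decide
  have h02 : (0 : Fin 3) ≠ 2 := by decide
  have h12 : (1 : Fin 3) ≠ 2 := by decide
  have h5' : qtil q 2 1 = 1 := by rw [qtil_comm, h5]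
  have h4' : qtil q 2 0 = -ζ := by rw [qtil_comm, h4]
  have h3' : qtil q 1 0 = ζ := by rw [qtil_comm, h3]
  unfold IsAffineDiagram
  fin_cases i
  · change (PreNicholsPaper.reflectMat q 0 0 0 : ℂ) = ζ ∧ (PreNicholsPaper.reflectMat q 0 1 1 : ℂ) = ζ ^ 2 ∧
      (PreNicholsPaper.reflectMat q 0 2 2 : ℂ) = -ζ ^ 2 ∧ qtil (PreNicholsPaper.reflectMat q 0) 0 1 = ζ ∧
      qtil (PreNicholsPaper.reflectMat q 0) 0 2 = -ζ ∧ qtil (PreNicholsPaper.reflectMat q 0) 1 2 = 1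
    rw [reflectMat_self, reflectMat_diag q h01, reflectMat_diag q h02, qtil_reflectMat_self q h01,
      qtil_reflectMat_self q h02, qtil_reflectMat q h01 h02, e1, e2, h0, h1, h2, h3, h4, h5]
    refine ⟨rfl, ?_, ?_, ?_, ?_, ?_⟩ <;> field_simp <;> grind
  · change (PreNicholsPaper.reflectMat q 1 0 0 : ℂ) = ζ ∧ (PreNicholsPaper.reflectMat q 1 1 1 : ℂ) = ζ ^ 2 ∧
      (PreNicholsPaper.reflectMat q 1 2 2 : ℂ) = -ζ ^ 2 ∧ qtil (PreNicholsPaper.reflectMat q 1) 0 1 = ζ ∧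
      qtil (PreNicholsPaper.reflectMat q 1) 0 2 = -ζ ∧ qtil (PreNicholsPaper.reflectMat q 1) 1 2 = 1
    rw [reflectMat_self, reflectMat_diag q h01.symm, reflectMat_diag q h12, qtil_comm _ 0 1,
      qtil_reflectMat_self q h01.symm, qtil_reflectMat_self q h12,
      qtil_reflectMat q h01.symm h12, e3, e4, h0, h1, h2, h3', h4, h5]
    refine ⟨?_, rfl, ?_, ?_, ?_, ?_⟩ <;> field_simp <;> grind
  · change (PreNicholsPaper.reflectMat q 2 0 0 : ℂ) = ζ ∧ (PreNicholsPaper.reflectMat q 2 1 1 : ℂ) = ζ ^ 2 ∧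
      (PreNicholsPaper.reflectMat q 2 2 2 : ℂ) = -ζ ^ 2 ∧ qtil (PreNicholsPaper.reflectMat q 2) 0 1 = ζ ∧
      qtil (PreNicholsPaper.reflectMat q 2) 0 2 = -ζ ∧ qtil (PreNicholsPaper.reflectMat q 2) 1 2 = 1
    rw [reflectMat_self, reflectMat_diag q h02.symm, reflectMat_diag q h12.symm, qtil_comm _ 0 2,
      qtil_comm _ 1 2, qtil_reflectMat_self q h02.symm, qtil_reflectMat_self q h12.symm,
      qtil_reflectMat q h02.symm h12.symm, e5, e6, h0, h1, h2, h3, h4', h5']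
    refine ⟨?_, ?_, rfl, ?_, ?_, ?_⟩ <;> field_simp <;> grind

lemma IsAffineDiagram.sRefl (hζ : ζ ^ 2 + ζ + 1 = 0) {q : Fin 3 → Fin 3 → ℂˣ}
    (h : IsAffineDiagram ζ q) (x y z : ℤ) :
    sRefl q 0 ![x, y, z] = ![2 * y + 2 * z - x, y, z] ∧ sRefl q 1 ![x, y, z] = ![x, x - y, z] ∧
      sRefl q 2 ![x, y, z] = ![x, y, x - z] := by
  have h01 : (0 : Fin 3) ≠ 1 := by decide
  have h02 : (0 : Fin 3) ≠ 2 := by decide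
  have h12 : (1 : Fin 3) ≠ 2 := by decide
  obtain ⟨e1, e2, e3, e4, e5, e6⟩ := h.cartanNum_eq hζ
  refine ⟨?_, ?_, ?_⟩ <;> ext k <;> fin_cases k <;>
    simp [PreNicholsPaper.sRefl, Fin.sum_univ_three, cij_self, cij_eq _ h01, cij_eq _ h02,
      cij_eq _ h12, cij_eq _ h01.symm, cij_eq _ h02.symm, cij_eq _ h12.symm, e1, e2, e3, e4, e5,
      e6] <;> ring

lemma IsAffineDiagram.not_finiteRootSystem (hζ : ζ ^ 2 + ζ + 1 = 0) {q : Fin 3 → Fin 3 → ℂˣ}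
    (h : IsAffineDiagram ζ q) : ¬FiniteRootSystem q := by
  rintro ⟨-, hfin⟩
  have key : ∀ n : ℕ, ∃ q', ReachRoot q q' ![2 * n + 1, n, n] ∧ IsAffineDiagram ζ q' := by
    intro n
    induction n with
    | zero =>
      refine ⟨q, ?_, h⟩
      convert ReachRoot.simple (0 : Fin 3) using 1
      ext k; fin_cases k <;> simp
    | succ n ih =>
      obtain ⟨q', hr, hq'⟩ := ih
      have h1 := hq'.reflectMat hζ 1
      have h2 := h1.reflectMat hζ 2
      have hr1 := hr.reflect 1
      rw [(hq'.sRefl hζ _ _ _).2.1] at hr1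
      have hr2 := hr1.reflect 2
      rw [(h1.sRefl hζ _ _ _).2.2] at hr2
      have hr3 := hr2.reflect 0
      rw [(h2.sRefl hζ _ _ _).1] at hr3
      refine ⟨_, ?_, h2.reflectMat hζ 0⟩
      convert hr3 using 1
      ext k; fin_cases k <;> simp <;> ring
  obtain ⟨M, hM⟩ := (hfin.image fun β => β 1).bddAbove
  obtain ⟨q', hr, -⟩ := key (M.toNat + 1)
  have := hM ⟨_, ⟨q', hr⟩, rfl⟩
  have := Int.self_le_toNat M
  simp at *

end RankThree

section PrimitiveElements

variable {θ : ℕ} {q : Fin θ → Fin θ → ℂˣ} (S : BraidedStr θ q)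

lemma Δ_two (a b : Fin θ) : S.Δ (gen θ a * gen θ b) =
    (gen θ a * gen θ b) ⊗ₜ[ℂ] 1 + gen θ a ⊗ₜ gen θ b + (q a b : ℂ) • gen θ b ⊗ₜ gen θ a +
      1 ⊗ₜ (gen θ a * gen θ b) := by
  rw [Δ_gen_mul, S.Δ_gen]
  simp only [map_add, primMul_tmul, twist_gen, map_one, qf_single, mul_one,
    TensorProduct.smul_tmul']
  abel

lemma Δ_three (a b c : Fin θ) : S.Δ (gen θ a * (gen θ b * gen θ c)) =
    (gen θ a * (gen θ b * gen θ c)) ⊗ₜ[ℂ] 1 + 1 ⊗ₜ (gen θ a * (gen θ b * gen θ c)) +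
      (gen θ a * gen θ b) ⊗ₜ gen θ c + (q b c : ℂ) • (gen θ a * gen θ c) ⊗ₜ gen θ b +
      ((q a b : ℂ) * q a c) • (gen θ b * gen θ c) ⊗ₜ gen θ a +
      gen θ a ⊗ₜ (gen θ b * gen θ c) + (q a b : ℂ) • gen θ b ⊗ₜ (gen θ a * gen θ c) +
      ((q b c : ℂ) * q a c) • gen θ c ⊗ₜ (gen θ a * gen θ b) := by
  rw [Δ_gen_mul, Δ_two]
  simp only [map_add, map_smul, primMul_tmul, twist_gen, map_one, map_mul, qf_single, mul_one,
    ← TensorProduct.smul_tmul', smul_mul_assoc, mul_smul_comm, smul_smul, smul_add]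
  module

lemma Δ_four (a b c d : Fin θ) : S.Δ (gen θ a * (gen θ b * (gen θ c * gen θ d))) =
    (gen θ a * (gen θ b * (gen θ c * gen θ d))) ⊗ₜ[ℂ] 1 +
      1 ⊗ₜ (gen θ a * (gen θ b * (gen θ c * gen θ d))) +
      ((gen θ a * (gen θ b * gen θ c)) ⊗ₜ gen θ d +
      (q c d : ℂ) • (gen θ a * (gen θ b * gen θ d)) ⊗ₜ gen θ c +
      ((q b c : ℂ) * q b d) • (gen θ a * (gen θ c * gen θ d)) ⊗ₜ gen θ b +
      ((q a b : ℂ) * (q a c * q a d)) • (gen θ b * (gen θ c * gen θ d)) ⊗ₜ gen θ a +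
      (gen θ a * gen θ b) ⊗ₜ (gen θ c * gen θ d) +
      (q b c : ℂ) • (gen θ a * gen θ c) ⊗ₜ (gen θ b * gen θ d) +
      ((q c d : ℂ) * q b d) • (gen θ a * gen θ d) ⊗ₜ (gen θ b * gen θ c) +
      ((q a b : ℂ) * q a c) • (gen θ b * gen θ c) ⊗ₜ (gen θ a * gen θ d) +
      ((q c d : ℂ) * (q a b * q a d)) • (gen θ b * gen θ d) ⊗ₜ (gen θ a * gen θ c) +
      ((q b c : ℂ) * q b d * (q a c * q a d)) • (gen θ c * gen θ d) ⊗ₜ (gen θ a * gen θ b) +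
      gen θ a ⊗ₜ (gen θ b * (gen θ c * gen θ d)) +
      (q a b : ℂ) • gen θ b ⊗ₜ (gen θ a * (gen θ c * gen θ d)) +
      ((q b c : ℂ) * q a c) • gen θ c ⊗ₜ (gen θ a * (gen θ b * gen θ d)) +
      ((q c d : ℂ) * q b d * q a d) • gen θ d ⊗ₜ (gen θ a * (gen θ b * gen θ c))) := by
  rw [Δ_gen_mul, Δ_three]
  simp only [map_add, map_smul, primMul_tmul, twist_gen, map_one, map_mul, qf_single, mul_one,
    ← TensorProduct.smul_tmul', smul_mul_assoc, mul_smul_comm, smul_smul, smul_add]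
  module

lemma isPrimitiveIn_cube {i : Fin θ} (h : (q i i : ℂ) ^ 2 + q i i + 1 = 0) :
    IsPrimitiveIn S (gen θ i * (gen θ i * gen θ i)) := by
  rw [IsPrimitiveIn, Δ_three]
  generalize (q i i : ℂ) = ζ at h
  match_scalars
  · ring
  · ring
  · linear_combination h
  · linear_combination h

/-- Twice the primitive element of degree `2α_i + α_j + α_k`. -/
def primElt (q : Fin θ → Fin θ → ℂˣ) (i j k : Fin θ) : TV θ :=
  (2 : ℂ) • (gen θ i * (gen θ j * (gen θ i * gen θ k))) -
  ((q i i : ℂ) * q j i) • (gen θ i * (gen θ i * (gen θ j * gen θ k))) -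
  ((2 + q i i : ℂ) * q i k) • (gen θ i * (gen θ j * (gen θ k * gen θ i))) +
  (2 * q i i * q i j : ℂ) • (gen θ j * (gen θ i * (gen θ i * gen θ k))) +
  (2 * (1 - q i i) * q i j * q i k : ℂ) • (gen θ j * (gen θ i * (gen θ k * gen θ i))) +
  (2 * (1 - q i i) * q j i * q i k * q j k : ℂ) • (gen θ i * (gen θ k * (gen θ i * gen θ j))) +
  (3 * q i i * q j i * q j k : ℂ) • (gen θ i * (gen θ i * (gen θ k * gen θ j))) -
  ((2 + q i i) * q i k * q j k : ℂ) • (gen θ i * (gen θ k * (gen θ j * gen θ i))) -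
  (2 * q j i * q i k ^ 2 * q j k : ℂ) • (gen θ k * (gen θ i * (gen θ i * gen θ j))) +
  (2 * (1 + q i i) * q i k ^ 2 * q j k : ℂ) • (gen θ k * (gen θ i * (gen θ j * gen θ i))) -
  (3 * q i j * q i k ^ 2 : ℂ) • (gen θ j * (gen θ k * (gen θ i * gen θ i))) +
  (q i j * q i k ^ 2 * q j k : ℂ) • (gen θ k * (gen θ j * (gen θ i * gen θ i)))

lemma isPrimitiveIn_primElt {i j k : Fin θ} (h : (q i i : ℂ) ^ 2 + q i i + 1 = 0)
    (hij : (q i j : ℂ) * q j i = q i i) (hik : (q i k : ℂ) * q k i = -q i i)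
    (hjk : (q j k : ℂ) * q k j = 1) : IsPrimitiveIn S (primElt q i j k) := by
  rw [IsPrimitiveIn, primElt]
  simp only [map_add, map_sub, map_smul, Δ_four, TensorProduct.add_tmul, TensorProduct.sub_tmul,
    TensorProduct.tmul_add, TensorProduct.tmul_sub, TensorProduct.tmul_smul,
    ← TensorProduct.smul_tmul']
  generalize (q i i : ℂ) = ζ at *
  generalize (q i j : ℂ) = a at *
  generalize (q j i : ℂ) = a' at *
  generalize (q i k : ℂ) = b at *
  generalize (q k i : ℂ) = b' at *
  generalize (q j k : ℂ) = c at *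
  generalize (q k j : ℂ) = c' at *
  match_scalars
  all_goals first | ring1 | grind

end PrimitiveElements

lemma proj_eq_zero {θ : ℕ} {q : Fin θ → Fin θ → ℂˣ} {S : BraidedStr θ q} {I : Submodule ℂ (TV θ)}
    (hI : IsPreNicholsIdeal S I) {n : ℕ} (hn : n < 2) {t : TV θ} (ht : t ∈ I) : proj θ n t = 0 := by
  rw [hI.homog_ge2] at ht
  induction ht using Submodule.span_induction with
  | mem x hx =>
    obtain ⟨-, m, hm2, hm⟩ := hx
    rw [proj_of_mem hm, if_neg (by omega)]
  | zero => simp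
  | add x y _ _ hx hy => rw [map_add, hx, hy, add_zero]
  | smul c x _ hx => rw [map_smul, hx, smul_zero]

lemma one_mem_homogTot (θ : ℕ) : (1 : TV θ) ∈ homogTot θ 0 := by
  simpa using wordElem_mem_homogTot (θ := θ) (w := []) rfl

lemma gen_mem_homogTot {θ : ℕ} (a : Fin θ) : gen θ a ∈ homogTot θ 1 := by
  simpa [wordElem_singleton] using wordElem_mem_homogTot (θ := θ) (w := [a]) rfl

lemma linearIndependent_gen (θ : ℕ) : LinearIndependent ℂ (gen θ) := by
  have h := (wordBasis θ).linearIndependent.comp (fun a : Fin θ => [a]) (fun a b h => by simpa using h)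
  convert h using 1
  ext1 a
  simp [wordBasis_apply, wordElem_singleton]

/-- The matrix of the braiding between homogeneous elements of the given degrees. -/
def degBraiding {θ m : ℕ} (q : Fin θ → Fin θ → ℂˣ) (d : Fin m → Fin θ → ℕ) : Fin m → Fin m → ℂˣ :=
  fun a b => Units.mk0 (qf q (d a) (d b)) (qf_ne_zero q _ _)

section Membership

variable {θ : ℕ} {q : Fin θ → Fin θ → ℂˣ} {S : BraidedStr θ q} {I : Submodule ℂ (TV θ)}

lemma finiteRootSystem_gens (hAAH : AAH) (hI : IsPreNicholsIdeal S I) (hGK : FinGK I) {m : ℕ}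
    {f : Fin m → Fin θ} (hf : Function.Injective f) :
    FiniteRootSystem (fun a b => q (f a) (f b)) := by
  refine finiteRootSystem_of_primitive hAAH hI hGK (y := fun a => gen θ (f a))
    (d := fun a => δ θ (f a)) (fun a => gen_mem_homogD _) (fun a b => (qf_single q _ _).symm)
    (fun a => S.Δ_gen _) fun c g h => ?_
  have hg : ∑ a, g a • gen θ (f a) ∈ homogTot θ 1 :=
    Submodule.sum_mem _ fun a _ => Submodule.smul_mem _ _ (gen_mem_homogTot _)
  have h0 := proj_eq_zero hI (n := 0) (by norm_num) h
  have h1 := proj_eq_zero hI (n := 1) (by norm_num) h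
  rw [map_add, map_smul, proj_of_mem (one_mem_homogTot θ), proj_of_mem hg] at h0 h1
  simp only [if_true, one_ne_zero, zero_ne_one, if_false, smul_zero, add_zero, zero_add] at h0 h1
  exact ⟨(smul_eq_zero.1 h0).resolve_right one_ne_zero,
    Fintype.linearIndependent_iff.1 ((linearIndependent_gen θ).comp f hf) g h1⟩

lemma finiteRootSystem_gen_pair (hAAH : AAH) (hI : IsPreNicholsIdeal S I) (hGK : FinGK I)
    (a : Fin θ) {y : TV θ} {e : Fin θ → ℕ} {n : ℕ} (hn : 2 ≤ n) (hye : y ∈ homogD θ e)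
    (hyn : y ∈ homogTot θ n) (hp : IsPrimitiveIn S y) (hy : y ∉ I) :
    FiniteRootSystem (degBraiding q ![δ θ a, e]) := by
  refine finiteRootSystem_of_primitive hAAH hI hGK (y := ![gen θ a, y])
    (d := ![δ θ a, e]) ?_ (fun _ _ => rfl) ?_ fun c g h => ?_
  · simpa [Fin.forall_fin_two] using ⟨gen_mem_homogD a, hye⟩
  · simpa [Fin.forall_fin_two] using ⟨S.Δ_gen a, hp⟩
  simp only [Fin.sum_univ_two, Matrix.cons_val_zero, Matrix.cons_val_one] at h
  have h0 := proj_eq_zero hI (n := 0) (by norm_num) h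
  have h1 := proj_eq_zero hI (n := 1) (by norm_num) h
  simp only [map_add, map_smul, proj_of_mem (one_mem_homogTot θ), proj_of_mem hyn,
    proj_of_mem (gen_mem_homogTot a), show n ≠ 0 by omega, show n ≠ 1 by omega,
    if_true, one_ne_zero, zero_ne_one, if_false, smul_zero, add_zero, zero_add] at h0 h1
  have hc : c = 0 := (smul_eq_zero.1 h0).resolve_right one_ne_zero
  have hg0 : g 0 = 0 := (smul_eq_zero.1 h1).resolve_right ((linearIndependent_gen θ).ne_zero a)
  rw [hc, hg0, zero_smul, zero_smul, zero_add, zero_add] at h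
  have hg1 : g 1 = 0 := by
    by_contra hne
    exact hy ((Submodule.smul_mem_iff _ hne).1 h)
  exact ⟨hc, by simpa [Fin.forall_fin_two] using ⟨hg0, hg1⟩⟩

end Membership

section Relation

variable {θ : ℕ} {q : Fin θ → Fin θ → ℂˣ}

lemma two_smul_relator {i j k : Fin θ} (h : (q i i : ℂ) ^ 2 + q i i + 1 = 0)
    (hij : (q i j : ℂ) * q j i = q i i) (hik : (q i k : ℂ) * q k i = -q i i)
    (hjk : (q j k : ℂ) * q k j = 1) :
    (2 : ℂ) • (brk q (δ θ i) (δ θ i + δ θ j + (δ θ i + δ θ k)) (gen θ i)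
        (brk q (δ θ i + δ θ j) (δ θ i + δ θ k) (xw q [i, j]) (xw q [i, k])) +
      ((q j k : ℂ) * (q i k : ℂ) * (q j i : ℂ)) •
        brk q (δ θ i + δ θ i + δ θ k) (δ θ i + δ θ j) (xw q [i, i, k]) (xw q [i, j]) +
      (q i j : ℂ) • (xw q [i, j] * xw q [i, i, k])) =
    gen θ i * primElt q i j k -
      ((q i i : ℂ) ^ 2 * q i j * q i k) • (primElt q i j k * gen θ i) +
      ((2 * q i i * q j i * q i k ^ 3 * q j k : ℂ) •
        (gen θ k * (gen θ i * (gen θ i * gen θ i)) * gen θ j) +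
      (2 * q i i ^ 2 * q i j ^ 2 : ℂ) • (gen θ j * (gen θ i * (gen θ i * gen θ i)) * gen θ k) +
      (q i i * q j i : ℂ) • (gen θ i * (gen θ i * gen θ i) * (gen θ j * gen θ k)) -
      (3 * q i i * q j i * q j k : ℂ) • (gen θ i * (gen θ i * gen θ i) * (gen θ k * gen θ j)) -
      (3 * q i i ^ 2 * q i j ^ 2 * q i k ^ 3 : ℂ) •
        (gen θ j * gen θ k * (gen θ i * (gen θ i * gen θ i))) +
      (q i i ^ 2 * q i j ^ 2 * q i k ^ 3 * q j k : ℂ) •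
        (gen θ k * gen θ j * (gen θ i * (gen θ i * gen θ i)))) := by
  simp only [primElt, brk, xw, ad1, degW_cons, degW_nil, add_zero, qf_add_left, qf_add_right,
    qf_single, mul_add, add_mul, mul_sub, sub_mul, smul_mul_assoc, mul_smul_comm, mul_assoc]
  generalize (q i i : ℂ) = ζ at *
  generalize (q i j : ℂ) = a at *
  generalize (q j i : ℂ) = a' at *
  generalize (q i k : ℂ) = b at *
  generalize (q k i : ℂ) = b' at *
  generalize (q j k : ℂ) = c at *
  generalize (q k j : ℂ) = c' at *
  match_scalars
  all_goals first | ring1 | grind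

lemma wordElem_mem_homogD {w : List (Fin θ)} {e : Fin θ → ℕ} (h : degW θ w = e) :
    wordElem θ w ∈ homogD θ e :=
  Submodule.subset_span ⟨w, h, rfl⟩

lemma primElt_mem {M : Submodule ℂ (TV θ)} {i j k : Fin θ}
    (hM : ∀ w : List (Fin θ), w.Perm [i, i, j, k] → wordElem θ w ∈ M) : primElt q i j k ∈ M := by
  have hw : ∀ a b c d : Fin θ, [a, b, c, d].Perm [i, i, j, k] →
      gen θ a * (gen θ b * (gen θ c * gen θ d)) ∈ M := fun a b c d h => by
    simpa [wordElem] using hM _ h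
  unfold primElt
  repeat' first
    | refine Submodule.add_mem _ ?_ ?_
    | refine Submodule.sub_mem _ ?_ ?_
    | refine Submodule.smul_mem _ _ ?_
  all_goals
    refine hw _ _ _ _ (List.perm_iff_count.2 fun x => ?_)
    simp only [List.count_cons] <;> omega

lemma primElt_mem_homogTot (i j k : Fin θ) : primElt q i j k ∈ homogTot θ 4 :=
  primElt_mem fun _ h => wordElem_mem_homogTot h.length_eq

lemma primElt_mem_homogD (i j k : Fin θ) :
    primElt q i j k ∈ homogD θ (δ θ i + (δ θ i + (δ θ j + δ θ k))) := by
  refine primElt_mem fun w h => wordElem_mem_homogD ?_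
  have hd : degW θ w = degW θ [i, i, j, k] := funext fun x => h.count_eq x
  simp [hd, degW_cons, degW_nil]

lemma cube_eq_wordElem (i : Fin θ) : gen θ i * (gen θ i * gen θ i) = wordElem θ [i, i, i] := by
  simp [wordElem]

variable {S : BraidedStr θ q} {I : Submodule ℂ (TV θ)}

lemma cube_mem (hAAH : AAH) (hI : IsPreNicholsIdeal S I) (hGK : FinGK I) {i k : Fin θ}
    (h : (q i i : ℂ) ^ 2 + q i i + 1 = 0) (hik : (q i k : ℂ) * q k i = -q i i) :
    gen θ i * (gen θ i * gen θ i) ∈ I := by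
  by_contra hy
  have hfin := finiteRootSystem_gen_pair hAAH hI hGK k (e := δ θ i + (δ θ i + δ θ i))
    (n := 3) (by norm_num)
    (by rw [cube_eq_wordElem]; exact wordElem_mem_homogD (by simp [degW_cons, degW_nil]))
    (by rw [cube_eq_wordElem]; exact wordElem_mem_homogTot rfl) (isPrimitiveIn_cube S h) hy
  have hr := hfin.1 _ 1 ⟨_, ReachRoot.simple 0⟩ 0 (by decide)
  obtain ⟨n, hn⟩ := hr
  have h3 : (q i i : ℂ) ^ 3 = 1 := by linear_combination ((q i i : ℂ) - 1) * h
  have h0 : (degBraiding q ![δ θ k, δ θ i + (δ θ i + δ θ i)] 1 1 : ℂ) = 1 := by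
    simp only [degBraiding, Units.val_mk0, Matrix.cons_val_one, Matrix.cons_val_zero,
      qf_add_left, qf_add_right, qf_single]
    linear_combination ((q i i : ℂ) ^ 6 + q i i ^ 3 + 1) * h3
  have hp : qtil (degBraiding q ![δ θ k, δ θ i + (δ θ i + δ θ i)]) 1 0 = -1 := by
    simp only [qtil, degBraiding, Units.val_mk0, Matrix.cons_val_one, Matrix.cons_val_zero,
      qf_add_left, qf_add_right, qf_single]
    calc _ = ((q i k : ℂ) * q k i) ^ 3 := by ring
      _ = _ := by rw [hik]; linear_combination -h3
  rw [cSet_eq, h0, hp, mem_cartanSet] at hn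
  norm_num at hn

lemma primElt_mem_ideal (hAAH : AAH) (hI : IsPreNicholsIdeal S I) (hGK : FinGK I) {i j k : Fin θ}
    (hij : i ≠ j) (hik : i ≠ k) (hjk : j ≠ k)
    (h : (q i i : ℂ) ^ 2 + q i i + 1 = 0) (hqij : (q i j : ℂ) * q j i = q i i)
    (hqik : (q i k : ℂ) * q k i = -q i i) (hqjk : (q j k : ℂ) * q k j = 1) :
    primElt q i j k ∈ I := by
  by_contra hy
  have h3 : (q i i : ℂ) ^ 3 = 1 := by linear_combination ((q i i : ℂ) - 1) * h
  have hj := finite_zeta_zeta h (q := fun a b => q (![i, j] a) (![i, j] b)) rfl hqij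
    (finiteRootSystem_gens hAAH hI hGK (f := ![i, j]) (by
      intro a b; fin_cases a <;> fin_cases b <;> simp [hij, hij.symm]))
  have hk := finite_zeta_neg_zeta h (q := fun a b => q (![i, k] a) (![i, k] b)) rfl hqik
    (finiteRootSystem_gens hAAH hI hGK (f := ![i, k]) (by
      intro a b; fin_cases a <;> fin_cases b <;> simp [hik, hik.symm]))
  have hfin3 : FiniteRootSystem (fun a b => q (![i, j, k] a) (![i, j, k] b)) :=
    finiteRootSystem_gens hAAH hI hGK (f := ![i, j, k]) (by
      intro a b
      fin_cases a <;> fin_cases b <;> simp [hij, hij.symm, hik, hik.symm, hjk, hjk.symm])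
  have hfin := finiteRootSystem_gen_pair hAAH hI hGK i (by norm_num) (primElt_mem_homogD i j k)
    (primElt_mem_homogTot i j k) (isPrimitiveIn_primElt S h hqij hqik hqjk) hy
  simp only [Matrix.cons_val_one, Matrix.cons_val_zero] at hj hk
  set e := δ θ i + (δ θ i + (δ θ j + δ θ k))
  have h0 : (degBraiding q ![δ θ i, e] 0 0 : ℂ) = q i i := by
    simp [degBraiding, qf_single]
  have hp : qtil (degBraiding q ![δ θ i, e]) 0 1 = -1 := by
    simp only [e, qtil, degBraiding, Units.val_mk0, Matrix.cons_val_one, Matrix.cons_val_zero,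
      qf_add_left, qf_add_right, qf_single]
    calc _ = (q i i : ℂ) ^ 4 * ((q i j : ℂ) * q j i) * ((q i k : ℂ) * q k i) := by ring
      _ = _ := by rw [hqij, hqik]; linear_combination -((q i i : ℂ) ^ 3 + 1) * h3
  have h1 : (degBraiding q ![δ θ i, e] 1 1 : ℂ) = q j j * q k k * q i i ^ 2 := by
    simp only [e, degBraiding, Units.val_mk0, Matrix.cons_val_one, Matrix.cons_val_zero,
      qf_add_left, qf_add_right, qf_single]
    calc _ = (q i i : ℂ) ^ 4 * ((q i j : ℂ) * q j i) ^ 2 * ((q i k : ℂ) * q k i) ^ 2 *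
          ((q j k : ℂ) * q k j) * (q j j * q k k) := by ring
      _ = _ := by
        rw [hqij, hqik, hqjk]
        linear_combination (q j j * q k k : ℂ) * ((q i i : ℂ) ^ 5 + q i i ^ 2) * h3
  have h9 : (q i i : ℂ) ^ 9 = 1 := by rw [show 9 = 3 * 3 from rfl, pow_mul, h3, one_pow]
  rcases hj with hj | hj <;> rcases hk with hk | hk
  · refine not_finiteRootSystem_of_pow_nine (by rw [h0, h9]) (by rw [hp]; norm_num) ?_ hfin
    rw [h1, hj, hk, show (-1 : ℂ) * -1 * q i i ^ 2 = q i i ^ 2 by ring, ← pow_mul, mul_comm, pow_mul, h9, one_pow]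
  · refine not_finiteRootSystem_of_pow_nine (by rw [h0, h9]) (by rw [hp]; norm_num) ?_ hfin
    rw [h1, hj, hk, show (-1 : ℂ) * -q i i ^ 2 * q i i ^ 2 = q i i ^ 4 by ring, ← pow_mul, mul_comm, pow_mul, h9, one_pow]
  · refine not_finite_zeta_neg_one h h0 hp ?_ hfin
    rw [h1, hj, hk]
    linear_combination -(q i i : ℂ) * h3
  · exact IsAffineDiagram.not_finiteRootSystem h (q := fun a b => q (![i, j, k] a) (![i, j, k] b))
      ⟨rfl, hj, hk, hqij, hqik, hqjk⟩ hfin3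

end Relation


/-- Lemma 3.8: if `q̃_{jk} = 1` and `q_{ii} = q̃_{ij} = -q̃_{ik} ∈ G₃'`,
then `[x_i,[x_{ij},x_{ik}]_c]_c = -q_{jk}q_{ik}q_{ji}[x_{iik},x_{ij}]_c - q_{ij}x_{ij}x_{iik}`
in every finite-GKdim pre-Nichols algebra of `q`. -/
theorem statement_12 (θ : ℕ) (q : Fin θ → Fin θ → ℂˣ) (S : BraidedStr θ q)
    (hconn : (dynkin q).Connected)
    (hfd : FiniteDimensional ℂ (TV θ ⧸ Jq S))
    (hAAH : AAH)
    (I : Submodule ℂ (TV θ)) (hI : IsPreNicholsIdeal S I) (hGK : FinGK I)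
    (i j k : Fin θ) (hij : i ≠ j) (hik : i ≠ k) (hjk : j ≠ k)
    (h1 : qtil q j k = 1)
    (h2 : IsPrimitiveRoot (q i i : ℂ) 3)
    (h3 : (q i i : ℂ) = qtil q i j)
    (h4 : (q i i : ℂ) = -(qtil q i k)) :
    brk q (δ θ i) (δ θ i + δ θ j + (δ θ i + δ θ k)) (gen θ i)
        (brk q (δ θ i + δ θ j) (δ θ i + δ θ k) (xw q [i, j]) (xw q [i, k])) +
      ((q j k : ℂ) * (q i k : ℂ) * (q j i : ℂ)) •
        brk q (δ θ i + δ θ i + δ θ k) (δ θ i + δ θ j) (xw q [i, i, k]) (xw q [i, j]) +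
      (q i j : ℂ) • (xw q [i, j] * xw q [i, i, k]) ∈ I := by
  have hζ : (q i i : ℂ) ^ 2 + q i i + 1 = 0 := by
    have h := h2.geom_sum_eq_zero (by norm_num)
    simp only [Finset.sum_range_succ, Finset.sum_range_zero] at h
    linear_combination h
  have hqij : (q i j : ℂ) * q j i = q i i := h3.symm
  have hqik : (q i k : ℂ) * q k i = -q i i := by rw [h4, neg_neg]; rfl
  have hP := primElt_mem_ideal hAAH hI hGK hij hik hjk hζ hqij hqik h1
  have hX := cube_mem hAAH hI hGK hζ hqik
  refine (Submodule.smul_mem_iff I (two_ne_zero (α := ℂ))).1 ?_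
  rw [two_smul_relator hζ hqij hqik h1]
  have hl := fun a => hI.mul_left a _ hX
  have hr := fun a => hI.mul_right a _ hX
  have hlr := fun a b => hI.mul_right b _ (hl a)
  repeat' first
    | refine Submodule.add_mem _ ?_ ?_
    | refine Submodule.sub_mem _ ?_ ?_
    | refine Submodule.smul_mem _ _ ?_
  · exact hI.mul_left _ _ hP
  · exact hI.mul_right _ _ hP
  all_goals first | exact hl _ | exact hr _ | exact hlr _ _

end PreNicholsPaper
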